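/- arXiv:1908.01620 — 4 statements merged into one kernel-verified Lean document; each statement's English description precedes it below -/
import Mathlib

section
/- Let r ≥ 2 and a ≥ 1 be integers and let d_1,…,d_{r+a−1} be positive integers. Let L ⊆ W_{r,d_1}×⋯×W_{r,d_{r+a−1}} be the set of tuples (F_1,…,F_{r+a−1}) such that V(F_1,…,F_{r+a−1}) contains a line of ℙ^r. Then L is a Zariski closed irreducible subset of codimension Σ_{i=1}^{r+a−1}(d_i+1) − 2(r−1) in W_{r,d_1}×⋯×W_{r,d_{r+a−1}}. -/
open MvPolynomial

noncomputable section

variable (K : Type*) [Field K] (M : Type*) [AddCommGroup M] [Module K M]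

/-- Evaluation of a polynomial in the linear functionals of `M` at a point `v : M`.
These are precisely the polynomial functions on the affine space `M`. -/
def polyEval (p : MvPolynomial (M →ₗ[K] K) K) (v : M) : K :=
  MvPolynomial.eval (fun φ : M →ₗ[K] K => φ v) p

lemma polyEval_mul (p q : MvPolynomial (M →ₗ[K] K) K) (v : M) :
    polyEval K M (p * q) v = polyEval K M p v * polyEval K M q v :=
  map_mul (MvPolynomial.eval fun φ : M →ₗ[K] K => φ v) p q

/-- The collection of Zariski-closed subsets of the affine space `M`:
common zero loci of families of polynomial functions. -/
def zariskiCloseds : Set (Set M) :=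
  {s | ∃ S : Set (MvPolynomial (M →ₗ[K] K) K), s = {v | ∀ p ∈ S, polyEval K M p v = 0}}

/-- The Zariski topology on an affine space (vector space) `M` over `K`. -/
def zariskiTopology : TopologicalSpace M := by
  refine TopologicalSpace.ofClosed (zariskiCloseds K M) ⟨{1}, ?_⟩ ?_ ?_
  · ext v
    simp [polyEval]
  · intro A hA
    choose S hS using fun a : A => hA a.2
    refine ⟨⋃ a : A, S a, ?_⟩
    ext v
    simp only [Set.mem_sInter, Set.mem_setOf_eq, Set.mem_iUnion]
    constructor
    · rintro h p ⟨a, hp⟩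
      have := h a a.2
      rw [hS a] at this
      exact this p hp
    · intro h t ht
      have : v ∈ {w | ∀ p ∈ S ⟨t, ht⟩, polyEval K M p w = 0} :=
        fun p hp => h p ⟨⟨t, ht⟩, hp⟩
      rw [← hS ⟨t, ht⟩] at this
      exact this
  · rintro s ⟨S₁, rfl⟩ t ⟨S₂, rfl⟩
    refine ⟨Set.image2 (· * ·) S₁ S₂, ?_⟩
    ext v
    simp only [Set.mem_union, Set.mem_setOf_eq]
    constructor
    · rintro (h | h) p ⟨p₁, h₁, p₂, h₂, rfl⟩
      · show polyEval K M (p₁ * p₂) v = 0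
        rw [polyEval_mul, h p₁ h₁, zero_mul]
      · show polyEval K M (p₁ * p₂) v = 0
        rw [polyEval_mul, h p₂ h₂, mul_zero]
    · intro h
      by_contra hc
      push_neg at hc
      obtain ⟨⟨p₁, h₁, hv₁⟩, ⟨p₂, h₂, hv₂⟩⟩ := hc
      have h12 := h (p₁ * p₂) ⟨p₁, h₁, p₂, h₂, rfl⟩
      rw [polyEval_mul] at h12
      exact mul_ne_zero hv₁ hv₂ h12

/-- The dimension of a subset of affine space: the Krull dimension of its Zariski closure. -/
def dimSet {M : Type*} [TopologicalSpace M] (s : Set M) : WithBot ℕ∞ :=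
  topologicalKrullDim ↥(closure s)

/-- `vdimGE r n F m` says that the common projective vanishing locus
`V(F 0, …, F (n-1)) ⊆ ℙ^r` has dimension at least `m` (with `dim ∅ = -∞`).
This is encoded via the Krull dimension of the homogeneous coordinate ring of the
affine cone: `dim V(F) ≥ m` iff the cone has Krull dimension at least `max m 0 + 1`. -/
def vdimGE {K : Type*} [Field K] (r n : ℕ) (F : Fin n → MvPolynomial (Fin (r + 1)) K)
    (m : ℤ) : Prop :=
  ((m.toNat + 1 : ℕ) : WithBot ℕ∞) ≤
    ringKrullDim (MvPolynomial (Fin (r + 1)) K ⧸ Ideal.span (Set.range F))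

end

noncomputable section Statement5

open MvPolynomial

variable (K : Type*) [Field K]

/-- The affine space `W_{r, d 0} × ⋯ × W_{r, d (n-1)}` of `n`-tuples of homogeneous
forms of degrees `d 0, …, d (n-1)` in the variables `x_0, …, x_r`. -/
abbrev tupleSpace (r n : ℕ) (d : Fin n → ℕ) : Type _ :=
  (i : Fin n) → ↥(homogeneousSubmodule (Fin (r + 1)) K (d i))

/-- The Zariski topology on the affine space of tuples of forms. -/
instance (r n : ℕ) (d : Fin n → ℕ) : TopologicalSpace (tupleSpace K r n d) :=
  zariskiTopology K _

/-- The forms `F 0, …, F (n-1)` all vanish on a common line of `ℙ^r`. -/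
def vanishOnCommonLine {r n : ℕ} {d : Fin n → ℕ} (F : tupleSpace K r n d) : Prop :=
  ∃ v w : Fin (r + 1) → K, LinearIndependent K ![v, w] ∧
    ∀ i : Fin n, ∀ s t : K,
      MvPolynomial.eval (fun j => s * v j + t * w j) (F i : MvPolynomial (Fin (r + 1)) K) = 0

/-!
A line of `ℙ^r` is the column space of a nonzero alternating matrix of rank two, and for any
nonzero alternating matrix the column space contains a line. So some line lies in `V(F)` exactly
when the homogeneous forms `F i (A φ)` of `φ` vanish identically for some nonzero alternating `A`,
and elimination of the entries of `A` shows that the locus is closed.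

Choosing coordinates `x_j`, `j ∈ α ⊕ β`, with `α` of size two, the tuples containing a line are the
`G ∘ A` with `A` a matrix and `G` vanishing on the line `x_j = 0`, `j ∈ β`. When the block
`A.toBlocks₂₂` is invertible, a generic condition, `A` can be replaced by a shear. The ideal of the
locus is therefore the kernel of a polynomial parametrisation by the entries of a shear and the
coefficients of a tuple vanishing on the coordinate line: it is prime, and the dimension is at
most the number of parameters. Equality is a computation at first order: around a base tuple
containing the forms `x_j x_a ^ (d i - 1)`, one for each `j ∈ β`, suitable coefficients of the tuple
recover the parameters modulo quadratic terms, and an endomorphism of a polynomial ring that is the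
identity modulo quadratic terms is injective.
-/

section KrullDimension

theorem ringKrullDim_eq_of_isIntegral {A B : Type*} [CommRing A] [CommRing B] [Algebra A B]
    [Algebra.IsIntegral A B] [FaithfulSMul A B] : ringKrullDim B = ringKrullDim A := by
  apply le_antisymm
  · exact Order.krullDim_le_of_strictMono (PrimeSpectrum.comap (algebraMap A B))
      fun _ _ h => Ideal.IsIntegral.comap_lt_comap (R := A) h
  · refine iSup_le fun l => ?_
    obtain ⟨P, _, _⟩ := Ideal.nonempty_primesOver (S := B) l.head.asIdeal
    obtain ⟨L, hL, -⟩ := Ideal.exists_ltSeries_of_hasGoingUp l P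
    exact hL ▸ le_iSup (fun p : LTSeries (PrimeSpectrum B) => ((p.length : ℕ∞) : WithBot ℕ∞)) L

variable {k A : Type*} [Field k] [CommRing A] [IsDomain A] [Algebra k A]

theorem ringKrullDim_eq_toNat_trdeg [Algebra.FiniteType k A] :
    ringKrullDim A = (Cardinal.toNat (Algebra.trdeg k A) : ℕ) := by
  obtain ⟨s, g, g_injective, g_integral⟩ := exists_integral_inj_algHom_of_fg k A
  algebraize [g.toRingHom]
  have : FaithfulSMul (MvPolynomial (Fin s) k) A :=
    (faithfulSMul_iff_algebraMap_injective _ _).2 g_injective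
  have : Algebra.IsIntegral (MvPolynomial (Fin s) k) A := ⟨g_integral⟩
  have trdeg_eq : Cardinal.toNat (Algebra.trdeg k A) = s := by
    rw [← Cardinal.toNat_lift, ← lift_trdeg_add_eq k (MvPolynomial (Fin s) k) A,
      trdeg_eq_zero (R := MvPolynomial (Fin s) k), MvPolynomial.trdeg_of_isDomain]
    simp
  rw [ringKrullDim_eq_of_isIntegral (A := MvPolynomial (Fin s) k), trdeg_eq,
    MvPolynomial.ringKrullDim_of_isNoetherianRing]
  simp

theorem ringKrullDim_eq_card_of_injective [Algebra.FiniteType k A] {τ : Type*} [Finite τ]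
    {f : A →ₐ[k] MvPolynomial τ k} (hf : Function.Injective f)
    {g : MvPolynomial τ k →ₐ[k] A} (hg : Function.Injective g) :
    ringKrullDim A = (Nat.card τ : ℕ) := by
  have trdeg_eq := (lift_trdeg_le_of_injective f hf).antisymm
    (lift_trdeg_le_of_injective g hg)
  rw [ringKrullDim_eq_toNat_trdeg (k := k), ← Cardinal.toNat_lift, trdeg_eq, Cardinal.toNat_lift,
    MvPolynomial.trdeg_of_isDomain, Cardinal.toNat_lift, Nat.card]

end KrullDimension

section EndomorphismCongruentToIdentity

variable {R : Type*} [CommRing R] {φ : R →+* R}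

theorem map_sub_self_mem_sq_of_mem_span {S : Set R} (hφ : ∀ x, φ x - x ∈ Ideal.span S)
    (hS : ∀ x ∈ S, φ x - x ∈ Ideal.span S ^ 2) {x : R} (hx : x ∈ Ideal.span S) :
    φ x - x ∈ Ideal.span S ^ 2 := by
  induction hx using Submodule.span_induction with
  | mem x hx => exact hS x hx
  | zero => simp
  | add x y _ _ hx hy => simpa only [map_add, add_sub_add_comm] using add_mem hx hy
  | smul a x hx ih =>
    have expand : φ (a • x) - a • x = φ a * (φ x - x) + (φ a - a) * x := by
      rw [smul_eq_mul, map_mul]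
      ring
    rw [expand]
    exact add_mem (Ideal.mul_mem_left _ _ ih) (sq (Ideal.span S) ▸ Ideal.mul_mem_mul (hφ a) hx)

theorem map_sub_self_mem_pow_succ {J : Ideal R} (hφ : ∀ x, φ x - x ∈ J)
    (hJ : ∀ x ∈ J, φ x - x ∈ J ^ 2) (n : ℕ) {x : R} (hx : x ∈ J ^ n) :
    φ x - x ∈ J ^ (n + 1) := by
  induction n generalizing x with
  | zero => simpa using hφ x
  | succ n ih =>
    rw [pow_succ] at hx
    refine Submodule.mul_induction_on hx (fun a ha b hb => ?_) fun a b ha hb => ?_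
    · have map_a_mem : φ a ∈ J ^ n := by
        simpa using add_mem (Ideal.pow_le_pow_right n.le_succ (ih ha)) ha
      have expand : φ (a * b) - a * b = φ a * (φ b - b) + (φ a - a) * b := by
        rw [map_mul]
        ring
      rw [expand]
      refine add_mem ?_ (pow_succ J (n + 1) ▸ Ideal.mul_mem_mul (ih ha) hb)
      exact pow_add J n 2 ▸ Ideal.mul_mem_mul map_a_mem (hJ b hb)
    · simpa only [map_add, add_sub_add_comm] using add_mem ha hb

variable {k τ : Type*} [CommRing k] {f : τ → MvPolynomial τ k}

theorem aeval_sub_self_mem_idealOfVars (hf : ∀ j, f j - X j ∈ idealOfVars τ k)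
    (P : MvPolynomial τ k) : aeval f P - P ∈ idealOfVars τ k := by
  induction P using MvPolynomial.induction_on with
  | C a => simp
  | add p q hp hq => simpa only [map_add, add_sub_add_comm] using add_mem hp hq
  | mul_X p j hp =>
    have expand : aeval f (p * X j) - p * X j =
        aeval f p * (f j - X j) + (aeval f p - p) * X j := by
      rw [map_mul, aeval_X]
      ring
    rw [expand]
    exact add_mem (Ideal.mul_mem_left _ _ (hf j)) (Ideal.mul_mem_right _ _ hp)

theorem aeval_injective_of_sub_X_mem_sq (hf : ∀ j, f j - X j ∈ idealOfVars τ k ^ 2) :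
    Function.Injective (aeval (R := k) f) := by
  have sub_mem := aeval_sub_self_mem_idealOfVars fun j => Ideal.pow_le_self two_ne_zero (hf j)
  have sub_mem_sq : ∀ P ∈ idealOfVars τ k, aeval f P - P ∈ idealOfVars τ k ^ 2 := fun P =>
    map_sub_self_mem_sq_of_mem_span (φ := (aeval f : _ →ₐ[k] _).toRingHom) sub_mem
      (by rintro _ ⟨j, rfl⟩; simpa using hf j)
  rw [injective_iff_map_eq_zero]
  intro P hP
  have mem_pow (n : ℕ) : P ∈ idealOfVars τ k ^ n := by
    induction n with
    | zero => simp
    | succ n ih =>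
      have map_P_sub : aeval f P - P ∈ idealOfVars τ k ^ (n + 1) :=
        map_sub_self_mem_pow_succ (φ := (aeval f : _ →ₐ[k] _).toRingHom) sub_mem sub_mem_sq n ih
      rwa [hP, zero_sub, neg_mem_iff] at map_P_sub
  ext x
  exact (mem_pow_idealOfVars_iff' _ _).1 (mem_pow (x.degree + 1)) x (Nat.lt_succ_self _)

end EndomorphismCongruentToIdentity

theorem ringKrullDim_quotient_ker_aeval_eq_card {k : Type*} [Field k] {ν τ : Type*} [Finite ν]
    [Finite τ] {Ψ : ν → MvPolynomial τ k} {h : τ → MvPolynomial ν k}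
    (hΨ : ∀ t, aeval Ψ (h t) - X t ∈ idealOfVars τ k ^ 2) :
    ringKrullDim (MvPolynomial ν k ⧸ RingHom.ker (aeval (R := k) Ψ)) = (Nat.card τ : ℕ) := by
  have : (RingHom.ker (aeval (R := k) Ψ)).IsPrime := RingHom.ker_isPrime _
  let lift := Ideal.kerLiftAlg (aeval (R := k) Ψ)
  let g := (Ideal.Quotient.mkₐ k (RingHom.ker (aeval (R := k) Ψ))).comp (aeval h)
  have lift_comp : lift.comp g = aeval fun t => aeval Ψ (h t) :=
    MvPolynomial.algHom_ext fun t => by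
      simp only [lift, g, AlgHom.comp_apply, aeval_X, Ideal.Quotient.mkₐ_eq_mk, Ideal.kerLiftAlg_mk]
  refine ringKrullDim_eq_card_of_injective (f := lift) (Ideal.kerLiftAlg_injective _) (g := g) ?_
  refine Function.Injective.of_comp (f := lift) ?_
  rw [← AlgHom.coe_comp, lift_comp]
  exact aeval_injective_of_sub_X_mem_sq hΨ

section ZariskiTopology

variable {k : Type*} [Field k]

theorem isClosed_zariskiTopology_iff {M : Type*} [AddCommGroup M] [Module k M] {s : Set M} :
    @IsClosed M (zariskiTopology k M) s ↔ s ∈ zariskiCloseds k M := by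
  rw [← @isOpen_compl_iff]
  change sᶜᶜ ∈ zariskiCloseds k M ↔ _
  rw [compl_compl]

theorem subset_preimage_zeroLocus_iff {X ν : Type*} {e : X → ν → k} {s : Set X}
    {I : Ideal (MvPolynomial ν k)} :
    s ⊆ e ⁻¹' zeroLocus k I ↔ I ≤ vanishingIdeal k (e '' s) := by
  rw [← Set.image_subset_iff]
  exact le_zeroLocus_iff_le_vanishingIdeal

/-- The topology of `X` is pulled back along `e` from the Zariski topology of the coordinate space
`ν → k`. -/
def IsZariskiInducing {X ν : Type*} [TopologicalSpace X] (e : X → ν → k) : Prop :=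
  ∀ s : Set X, IsClosed s ↔ ∃ I : Ideal (MvPolynomial ν k), e ⁻¹' zeroLocus k I = s

section Coordinates

variable {M ν : Type*} [AddCommGroup M] [Module k M] (e : M ≃ₗ[k] (ν → k))

theorem exists_aeval_coordinates_eq_polyEval [Finite ν] (p : MvPolynomial (M →ₗ[k] k) k) :
    ∃ q : MvPolynomial ν k, ∀ v, aeval (e v) q = polyEval k M p v := by
  classical
  have := Fintype.ofFinite ν
  refine ⟨aeval (fun φ : M →ₗ[k] k => ∑ i, C (φ (e.symm fun j => if i = j then 1 else 0)) * X i) p,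
    fun v => ?_⟩
  rw [← AlgHom.comp_apply, polyEval, ← aeval_eq_eval]
  congr 1
  ext φ
  have apply_eq_sum := LinearMap.pi_apply_eq_sum_univ (φ ∘ₗ e.symm.toLinearMap) (e v)
  simp only [LinearMap.comp_apply, LinearEquiv.coe_coe,
    LinearEquiv.symm_apply_apply] at apply_eq_sum
  simp only [AlgHom.comp_apply, aeval_X, map_sum, map_mul, aeval_C, Algebra.algebraMap_self,
    RingHom.id_apply, apply_eq_sum, smul_eq_mul, mul_comm]

theorem exists_polyEval_eq_aeval_coordinates (q : MvPolynomial ν k) :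
    ∃ p : MvPolynomial (M →ₗ[k] k) k, ∀ v, polyEval k M p v = aeval (e v) q := by
  refine ⟨rename (fun i => LinearMap.proj i ∘ₗ e.toLinearMap) q, fun v => ?_⟩
  rw [polyEval, eval_rename, aeval_eq_eval]
  rfl

theorem isZariskiInducing_linearEquiv [Finite ν] :
    letI := zariskiTopology k M; IsZariskiInducing (k := k) e := by
  intro s
  rw [isClosed_zariskiTopology_iff]
  constructor
  · rintro ⟨S, rfl⟩
    choose q hq using exists_aeval_coordinates_eq_polyEval e
    refine ⟨Ideal.span (q '' S), ?_⟩
    ext v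
    simp only [Set.mem_preimage, zeroLocus_span, Set.forall_mem_image, Set.mem_ofPred_eq, hq]
  · rintro ⟨I, rfl⟩
    choose p hp using exists_polyEval_eq_aeval_coordinates e
    refine ⟨p '' I, ?_⟩
    ext v
    simp only [Set.mem_preimage, mem_zeroLocus_iff, Set.forall_mem_image, Set.mem_ofPred_eq, hp,
      SetLike.mem_coe]

end Coordinates

namespace IsZariskiInducing

variable {X ν : Type*} [TopologicalSpace X] {e : X → ν → k}

theorem comp_isInducing (he : IsZariskiInducing e) {Y : Type*} [TopologicalSpace Y] {f : Y → X}
    (hf : Topology.IsInducing f) : IsZariskiInducing (e ∘ f) := by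
  intro s
  rw [hf.isClosed_iff]
  constructor
  · rintro ⟨t, ht, rfl⟩
    obtain ⟨I, rfl⟩ := (he t).1 ht
    exact ⟨I, rfl⟩
  · rintro ⟨I, rfl⟩
    exact ⟨_, (he _).2 ⟨I, rfl⟩, rfl⟩

theorem isClosed_preimage_zeroLocus (he : IsZariskiInducing e) (I : Ideal (MvPolynomial ν k)) :
    IsClosed (e ⁻¹' zeroLocus k I) :=
  (he _).2 ⟨I, rfl⟩

theorem preimage_zeroLocus_vanishingIdeal (he : IsZariskiInducing e) {s : Set X}
    (hs : IsClosed s) : e ⁻¹' zeroLocus k (vanishingIdeal k (e '' s)) = s := by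
  obtain ⟨I, rfl⟩ := (he s).1 hs
  refine Set.Subset.antisymm (Set.preimage_mono (zeroLocus_anti_mono ?_)) fun x hx =>
    zeroLocus_vanishingIdeal_le (k := k) _ ⟨x, hx, rfl⟩
  exact le_zeroLocus_iff_le_vanishingIdeal.1 (Set.image_preimage_subset _ _)

theorem isIrreducible_iff (he : IsZariskiInducing e) {s : Set X} :
    IsIrreducible s ↔ (vanishingIdeal k (e '' s)).IsPrime := by
  have nonempty_iff : s.Nonempty ↔ vanishingIdeal k (e '' s) ≠ ⊤ := by
    rw [Set.nonempty_iff_ne_empty, ne_eq, ne_eq, ← top_le_iff, ← subset_preimage_zeroLocus_iff,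
      zeroLocus_top, Set.bot_eq_empty, Set.preimage_empty, Set.subset_empty_iff]
  rw [Ideal.isPrime_iff, IsIrreducible, isPreirreducible_iff_isClosed_union_isClosed]
  refine and_congr nonempty_iff ⟨fun hs p q hpq => ?_, fun hP z₁ z₂ h₁ h₂ hs => ?_⟩
  · have := hs _ _ (he.isClosed_preimage_zeroLocus (Ideal.span {p}))
      (he.isClosed_preimage_zeroLocus (Ideal.span {q})) fun x hx => by
        simpa [zeroLocus_span] using hpq (e x) ⟨x, hx, rfl⟩
    simpa only [subset_preimage_zeroLocus_iff, Ideal.span_singleton_le_iff_mem] using this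
  · obtain ⟨I, rfl⟩ := (he z₁).1 h₁
    obtain ⟨J, rfl⟩ := (he z₂).1 h₂
    rw [subset_preimage_zeroLocus_iff, subset_preimage_zeroLocus_iff]
    by_contra! h
    obtain ⟨⟨p, hp, hp'⟩, ⟨q, hq, hq'⟩⟩ := h.imp Set.not_subset.1 Set.not_subset.1
    refine (hP (x := p) (y := q) ?_).elim hp' hq'
    rintro _ ⟨x, hx, rfl⟩
    rw [map_mul, mul_eq_zero]
    exact (hs hx).imp (fun h => h p hp) fun h => h q hq

theorem topologicalKrullDim_eq [IsAlgClosed k] [Finite ν] (he : IsZariskiInducing e)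
    (hrange : ∃ I : Ideal (MvPolynomial ν k), Set.range e = zeroLocus k I) :
    topologicalKrullDim X = ringKrullDim (MvPolynomial ν k ⧸ vanishingIdeal k (Set.range e)) := by
  have image_preimage (P : PrimeSpectrum.zeroLocus (R := MvPolynomial ν k)
      (vanishingIdeal k (Set.range e))) :
      e '' (e ⁻¹' zeroLocus k P.1.asIdeal) = zeroLocus k P.1.asIdeal := by
    obtain ⟨I, hI⟩ := hrange
    refine Set.image_preimage_eq_of_subset ((zeroLocus_anti_mono P.2).trans ?_)
    rw [hI]
    exact zeroLocus_anti_mono (le_vanishingIdeal_zeroLocus _)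
  have vanishingIdeal_eq (P : PrimeSpectrum.zeroLocus (R := MvPolynomial ν k)
      (vanishingIdeal k (Set.range e))) :
      vanishingIdeal k (e '' (e ⁻¹' zeroLocus k P.1.asIdeal)) = P.1.asIdeal := by
    rw [image_preimage, IsPrime.vanishingIdeal_zeroLocus]
  let iso : TopologicalSpace.IrreducibleCloseds X ≃o
      (PrimeSpectrum.zeroLocus (R := MvPolynomial ν k) (vanishingIdeal k (Set.range e)))ᵒᵈ :=
    { toFun Z := OrderDual.toDual ⟨⟨vanishingIdeal k (e '' Z), he.isIrreducible_iff.1 Z.2⟩,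
        vanishingIdeal_anti_mono (Set.image_subset_range _ _)⟩
      invFun P := ⟨e ⁻¹' zeroLocus k (OrderDual.ofDual P).1.asIdeal,
        he.isIrreducible_iff.2 (by rw [vanishingIdeal_eq]; exact (OrderDual.ofDual P).1.2),
        he.isClosed_preimage_zeroLocus _⟩
      left_inv Z := by
        ext1
        exact he.preimage_zeroLocus_vanishingIdeal Z.3
      right_inv P := by
        refine congrArg OrderDual.toDual (Subtype.ext (PrimeSpectrum.ext ?_))
        exact vanishingIdeal_eq _
      map_rel_iff' := by
        intro Y Z
        change vanishingIdeal k (e '' Z) ≤ vanishingIdeal k (e '' Y) ↔ (Y : Set X) ⊆ Z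
        constructor
        · rw [← subset_preimage_zeroLocus_iff]
          exact fun h => h.trans (he.preimage_zeroLocus_vanishingIdeal Z.3).subset
        · exact fun h => vanishingIdeal_anti_mono (Set.image_mono h) }
  rw [ringKrullDim_quotient, topologicalKrullDim, Order.krullDim_eq_of_orderIso iso,
    Order.krullDim_orderDual]

theorem topologicalKrullDim_coe_eq [IsAlgClosed k] [Finite ν] (he : IsZariskiInducing e)
    (e_surjective : Function.Surjective e) {L : Set X} (hL : IsClosed L) :
    topologicalKrullDim L = ringKrullDim (MvPolynomial ν k ⧸ vanishingIdeal k (e '' L)) := by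
  have range_eq : Set.range (e ∘ ((↑) : L → X)) = e '' L := by
    rw [Set.range_comp, Subtype.range_coe]
  rw [← range_eq]
  refine (he.comp_isInducing Topology.IsInducing.subtypeVal).topologicalKrullDim_eq ?_
  obtain ⟨I, rfl⟩ := (he L).1 hL
  exact ⟨I, range_eq.trans (Set.image_preimage_eq _ e_surjective)⟩

end IsZariskiInducing

end ZariskiTopology

section MonomialsOfDegree

/-- The monomials of degree `N` in the variables `σ`, which index the coefficients of a form of
degree `N`. -/
abbrev DegreeMonomials (σ : Type*) (N : ℕ) : Type _ :=
  {m : σ →₀ ℕ // m.degree = N}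

instance {σ : Type*} [Fintype σ] [DecidableEq σ] (N : ℕ) : Fintype (DegreeMonomials σ N) :=
  Fintype.subtype (Finset.univ.finsuppAntidiag N) fun m => by
    simp [Finsupp.degree_eq_sum]

theorem card_degreeMonomials (σ : Type*) [Finite σ] (N : ℕ) :
    Nat.card (DegreeMonomials σ N) = (Nat.card σ + N - 1).choose N := by
  classical
  have := Fintype.ofFinite σ
  rw [Nat.card_eq_fintype_card, Nat.card_eq_fintype_card, Fintype.subtype_card,
    Finset.card_finsuppAntidiag_nat_eq_choose, Finset.card_univ]

theorem homogeneousComponent_eq_sum_degreeMonomials {σ R : Type*} [Fintype σ] [DecidableEq σ]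
    [CommSemiring R] (N : ℕ) (q : MvPolynomial σ R) :
    homogeneousComponent N q = ∑ m : DegreeMonomials σ N, monomial m.1 (coeff m.1 q) := by
  ext m
  rw [coeff_homogeneousComponent, coeff_sum]
  simp only [coeff_monomial]
  split_ifs with hm
  · rw [Finset.sum_eq_single ⟨m, hm⟩ (fun m' _ h => if_neg fun h' => h (Subtype.ext h'))
      (fun h => (h (Finset.mem_univ _)).elim), if_pos rfl]
  · exact (Finset.sum_eq_zero fun m' _ => if_neg fun h : m'.1 = m => hm (h ▸ m'.2)).symm

theorem homogeneousComponent_mem_span_of_isHomogeneous {σ R J : Type*} [CommRing R]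
    {g : J → MvPolynomial σ R} {deg : J → ℕ} (hg : ∀ j, (g j).IsHomogeneous (deg j)) (N : ℕ)
    {f : MvPolynomial σ R} (hf : f ∈ Ideal.span (Set.range g)) :
    homogeneousComponent N f ∈ Ideal.span (Set.range g) := by
  let _ : GradedAlgebra (homogeneousSubmodule σ R) := MvPolynomial.gradedAlgebra
  refine homogeneousComponent_mem_of_mem (Ideal.homogeneous_span _ _ ?_) hf N
  rintro _ ⟨j, rfl⟩
  exact ⟨deg j, hg j⟩

end MonomialsOfDegree

section Elimination

variable {k : Type*} [Field k] {M : Type*} [AddCommGroup M] [Module k M]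

theorem isClosed_zariskiTopology_of_separated {s : Set M}
    (hs : ∀ F ∉ s, ∃ D : MvPolynomial (M →ₗ[k] k) k,
      polyEval k M D F ≠ 0 ∧ ∀ G ∈ s, polyEval k M D G = 0) :
    @IsClosed M (zariskiTopology k M) s := by
  refine isClosed_zariskiTopology_iff.2 ⟨{D | ∀ G ∈ s, polyEval k M D G = 0}, ?_⟩
  refine Set.Subset.antisymm (fun F hF D hD => hD F hF) fun F hF => ?_
  by_contra hFs
  obtain ⟨D, hDF, hD⟩ := hs F hFs
  exact hDF (hF D hD)

theorem exists_linearMap_mem_span_of_mem_span {J R : Type*} [CommRing R] [Algebra k R]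
    (G : J → M →ₗ[k] R) {F₀ : M} {q : R} (hq : q ∈ Ideal.span (Set.range fun j => G j F₀)) :
    ∃ H : M →ₗ[k] R, H F₀ = q ∧ ∀ F, H F ∈ Ideal.span (Set.range fun j => G j F) := by
  induction hq using Submodule.span_induction with
  | mem x hx =>
    obtain ⟨j, rfl⟩ := hx
    exact ⟨G j, rfl, fun F => Ideal.subset_span ⟨j, rfl⟩⟩
  | zero => exact ⟨0, rfl, fun F => zero_mem _⟩
  | add x y _ _ hx hy =>
    obtain ⟨H₁, rfl, h₁⟩ := hx
    obtain ⟨H₂, rfl, h₂⟩ := hy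
    exact ⟨H₁ + H₂, rfl, fun F => add_mem (h₁ F) (h₂ F)⟩
  | smul a x _ hx =>
    obtain ⟨H, rfl, h⟩ := hx
    exact ⟨LinearMap.mulLeft k a ∘ₗ H, rfl, fun F => Ideal.mul_mem_left _ _ (h F)⟩

variable {σ : Type*}

theorem exists_pow_idealOfVars_le [IsAlgClosed k] [Finite σ] {I : Ideal (MvPolynomial σ k)}
    (hI : zeroLocus k I ⊆ {0}) : ∃ N, idealOfVars σ k ^ N ≤ I := by
  refine Ideal.exists_pow_le_of_le_radical_of_fg ?_ (idealOfVars_fg σ k)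
  rw [← vanishingIdeal_zeroLocus_eq_radical (K := k), Ideal.span_le]
  rintro _ ⟨s, rfl⟩ p hp
  rw [aeval_X, hI hp, Pi.zero_apply]

theorem det_coeff_eq_zero_of_mem_zeroLocus [Fintype σ] [DecidableEq σ] {N : ℕ}
    {I : Ideal (MvPolynomial σ k)}
    (hI : ∀ f ∈ I, homogeneousComponent N f ∈ I) {q : DegreeMonomials σ N → MvPolynomial σ k}
    (hq : ∀ m, q m ∈ I) {p : σ → k} (hp : p ∈ zeroLocus k I) (p_ne_zero : p ≠ 0) :
    (Matrix.of fun m m' : DegreeMonomials σ N => coeff m'.1 (q m)).det = 0 := by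
  by_contra det_ne_zero
  have mulVec_eq_zero : (Matrix.of fun m m' : DegreeMonomials σ N => coeff m'.1 (q m)).mulVec
      (fun m' => aeval p (monomial m'.1 (1 : k))) = 0 := by
    ext m
    rw [Pi.zero_apply, ← hp _ (hI _ (hq m)), homogeneousComponent_eq_sum_degreeMonomials, map_sum]
    simp [Matrix.mulVec, dotProduct, aeval_monomial]
  refine p_ne_zero (funext fun s => ?_)
  have pow_eq_zero := congrFun (Matrix.eq_zero_of_mulVec_eq_zero det_ne_zero mulVec_eq_zero)
    ⟨Finsupp.single s N, Finsupp.degree_single s N⟩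
  exact eq_zero_of_pow_eq_zero (n := N) (by simpa [aeval_monomial] using pow_eq_zero)

theorem isClosed_setOf_exists_common_zero [IsAlgClosed k] [Finite σ] {J : Type*}
    (G : J → M →ₗ[k] MvPolynomial σ k) (deg : J → ℕ)
    (hG : ∀ j F, (G j F).IsHomogeneous (deg j)) :
    @IsClosed M (zariskiTopology k M) {F | ∃ p : σ → k, p ≠ 0 ∧ ∀ j, eval p (G j F) = 0} := by
  classical
  have := Fintype.ofFinite σ
  let I (F : M) : Ideal (MvPolynomial σ k) := Ideal.span (Set.range fun j => G j F)
  have mem_zeroLocus (F : M) (p : σ → k) : p ∈ zeroLocus k (I F) ↔ ∀ j, eval p (G j F) = 0 := by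
    simp [I, zeroLocus_span, aeval_eq_eval]
  refine isClosed_zariskiTopology_of_separated fun F₀ hF₀ => ?_
  obtain ⟨N, hN⟩ := exists_pow_idealOfVars_le (I := I F₀) fun p hp => by
    by_contra p_ne_zero
    exact hF₀ ⟨p, p_ne_zero, (mem_zeroLocus F₀ p).1 hp⟩
  have monomial_mem (m : DegreeMonomials σ N) : monomial m.1 (1 : k) ∈ I F₀ :=
    hN ((monomial_mem_pow_idealOfVars_iff _ _ one_ne_zero).2 m.2.ge)
  choose H H_apply H_mem using fun m => exists_linearMap_mem_span_of_mem_span G (monomial_mem m)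
  let D : MvPolynomial (M →ₗ[k] k) k :=
    (Matrix.of fun m m' : DegreeMonomials σ N => X (lcoeff k m'.1 ∘ₗ H m)).det
  have polyEval_D (F : M) : polyEval k M D F =
      (Matrix.of fun m m' : DegreeMonomials σ N => coeff m'.1 (H m F)).det := by
    rw [polyEval, RingHom.map_det]
    congr 1
    ext m m'
    simp [lcoeff]
  refine ⟨D, ?_, ?_⟩
  · have coeff_eq_one : (Matrix.of fun m m' : DegreeMonomials σ N => coeff m'.1 (H m F₀)) = 1 := by
      ext m m'
      simp only [Matrix.of_apply, H_apply, coeff_monomial, Matrix.one_apply, Subtype.ext_iff]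
    rw [polyEval_D, coeff_eq_one, Matrix.det_one]
    exact one_ne_zero
  · rintro F ⟨p, p_ne_zero, hp⟩
    rw [polyEval_D]
    exact det_coeff_eq_zero_of_mem_zeroLocus
      (fun _ => homogeneousComponent_mem_span_of_isHomogeneous (hG · F) N) (fun m => H_mem m F)
      ((mem_zeroLocus F p).2 hp) p_ne_zero

end Elimination

section AlternatingMatrix

theorem vecMulVec_sub_vecMulVec_mulVec {σ R : Type*} [Fintype σ] [CommRing R] (v w φ : σ → R) :
    (Matrix.vecMulVec v w - Matrix.vecMulVec w v).mulVec φ = (w ⬝ᵥ φ) • v - (v ⬝ᵥ φ) • w := by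
  rw [Matrix.sub_mulVec, Matrix.vecMulVec_mulVec, Matrix.vecMulVec_mulVec, op_smul_eq_smul,
    op_smul_eq_smul]

variable {σ R : Type*} [LinearOrder σ] [CommRing R]

/-- The alternating matrix with entries `p` above the diagonal. Those of rank two are the Plücker
coordinates `v wᵀ - w vᵀ` of planes, but every nonzero one has at least two independent columns. -/
def alternatingMatrix (p : {x : σ × σ // x.1 < x.2} → R) : Matrix σ σ R :=
  Matrix.of fun a b =>
    if h : a < b then p ⟨(a, b), h⟩ else if h : b < a then -p ⟨(b, a), h⟩ else 0

theorem alternatingMatrix_wedge (v w : σ → R) :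
    alternatingMatrix (fun x => v x.1.1 * w x.1.2 - w x.1.1 * v x.1.2) =
      Matrix.vecMulVec v w - Matrix.vecMulVec w v := by
  ext a b
  rcases lt_trichotomy a b with h | rfl | h
  · simp [alternatingMatrix, Matrix.vecMulVec_apply, h]
  · simp [alternatingMatrix, Matrix.vecMulVec_apply, mul_comm]
  · simp [alternatingMatrix, Matrix.vecMulVec_apply, h, h.not_gt, mul_comm]

theorem map_alternatingMatrix {S : Type*} [CommRing S] (f : R →+* S)
    (p : {x : σ × σ // x.1 < x.2} → R) :
    (alternatingMatrix p).map f = alternatingMatrix (f ∘ p) := by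
  ext a b
  simp only [Matrix.map_apply, alternatingMatrix, Matrix.of_apply]
  split_ifs <;> simp

theorem isHomogeneous_alternatingMatrix_X (a b : σ) :
    (alternatingMatrix (R := MvPolynomial {x : σ × σ // x.1 < x.2} R) X a b).IsHomogeneous 1 := by
  simp only [alternatingMatrix, Matrix.of_apply]
  split_ifs
  · exact isHomogeneous_X _ _
  · exact (isHomogeneous_X _ _).neg
  · exact isHomogeneous_zero _ _ _

variable {k : Type*} [Field k]

theorem wedge_ne_zero [Finite σ] {v w : σ → k} (hvw : LinearIndependent k ![v, w]) :
    (fun x : {x : σ × σ // x.1 < x.2} => v x.1.1 * w x.1.2 - w x.1.1 * v x.1.2) ≠ 0 := by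
  intro wedge_eq_zero
  have := Fintype.ofFinite σ
  have matrix_eq_zero : Matrix.vecMulVec v w - Matrix.vecMulVec w v = 0 := by
    rw [← alternatingMatrix_wedge, wedge_eq_zero]
    ext a b
    simp [alternatingMatrix]
  refine hvw.ne_zero 1 (dotProduct_eq_zero w fun φ => ?_)
  have combination_eq_zero := vecMulVec_sub_vecMulVec_mulVec v w φ
  rw [matrix_eq_zero, Matrix.zero_mulVec, sub_eq_add_neg, ← neg_smul] at combination_eq_zero
  exact (LinearIndependent.pair_iff.1 hvw _ _ combination_eq_zero.symm).1

variable [Fintype σ]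

theorem exists_linearIndependent_pair_iff_exists_alternatingMatrix {Z : Set (σ → k)} :
    (∃ v w, LinearIndependent k ![v, w] ∧ ∀ s t : k, s • v + t • w ∈ Z) ↔
      ∃ p ≠ 0, ∀ φ, (alternatingMatrix p).mulVec φ ∈ Z := by
  constructor
  · rintro ⟨v, w, hvw, hZ⟩
    refine ⟨_, wedge_ne_zero hvw, fun φ => ?_⟩
    rw [alternatingMatrix_wedge, vecMulVec_sub_vecMulVec_mulVec, sub_eq_add_neg, ← neg_smul]
    exact hZ _ _
  · rintro ⟨p, hp, hZ⟩
    obtain ⟨⟨⟨a, b⟩, hab⟩, hp_ab⟩ := Function.ne_iff.1 hp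
    refine ⟨(alternatingMatrix p).col b, (alternatingMatrix p).col a, ?_, fun s t => ?_⟩
    · rw [LinearIndependent.pair_iff]
      intro s t hst
      have at_a := congrFun hst a
      have at_b := congrFun hst b
      have hab : a < b := hab
      simp only [Matrix.col_apply, alternatingMatrix, Matrix.of_apply, Pi.add_apply, Pi.smul_apply,
        smul_eq_mul, Pi.zero_apply, hab, hab.not_gt, lt_irrefl, dite_true, dite_false, mul_zero,
        add_zero, zero_add, mul_neg, neg_eq_zero] at at_a at_b
      exact ⟨(mul_eq_zero.1 at_a).resolve_right hp_ab, (mul_eq_zero.1 at_b).resolve_right hp_ab⟩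
    · have := hZ (Pi.single b s + Pi.single a t)
      simpa [Matrix.mulVec_add] using this

end AlternatingMatrix

section Closed

variable {k : Type*} [Field k] {r n : ℕ} {d : Fin n → ℕ}

theorem vanishOnCommonLine_iff_exists_alternatingMatrix {F : tupleSpace k r n d} :
    vanishOnCommonLine k F ↔ ∃ p ≠ 0, ∀ j : Fin n × (Fin (r + 1) → k),
      eval ((alternatingMatrix p).mulVec j.2) (F j.1 : MvPolynomial (Fin (r + 1)) k) = 0 := by
  refine Iff.trans ?_ (exists_linearIndependent_pair_iff_exists_alternatingMatrix
    (Z := {x | ∀ i, eval x (F i : MvPolynomial (Fin (r + 1)) k) = 0})) |>.trans ?_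
  · exact exists₂_congr fun v w => and_congr_right' ⟨fun h s t i => h i s t, fun h i s t => h s t i⟩
  · exact exists_congr fun p => and_congr_right' ⟨fun h j => h j.2 j.1, fun h φ i => h (i, φ)⟩

theorem isClosed_setOf_vanishOnCommonLine [IsAlgClosed k] :
    IsClosed {F : tupleSpace k r n d | vanishOnCommonLine k F} := by
  let f (φ : Fin (r + 1) → k) : Fin (r + 1) → MvPolynomial _ k :=
    (alternatingMatrix X).mulVec (C ∘ φ)
  have f_isHomogeneous (φ) (a) : (f φ a).IsHomogeneous 1 :=
    IsHomogeneous.sum _ _ _ fun b _ =>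
      (isHomogeneous_alternatingMatrix_X a b).mul (isHomogeneous_C _ (φ b))
  have eval_f (p φ) : (fun a => eval p (f φ a)) = (alternatingMatrix p).mulVec φ := by
    ext a
    rw [RingHom.map_mulVec, map_alternatingMatrix]
    congr 2 <;> ext <;> simp
  let G (j : Fin n × (Fin (r + 1) → k)) : tupleSpace k r n d →ₗ[k] MvPolynomial _ k :=
    (aeval (f j.2)).toLinearMap ∘ₗ Submodule.subtype _ ∘ₗ LinearMap.proj j.1
  have eval_G (p j F) : eval p (G j F) =
      eval ((alternatingMatrix p).mulVec j.2) (F j.1 : MvPolynomial (Fin (r + 1)) k) := by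
    rw [← eval_f]
    exact comp_aeval_apply (f j.2) (aeval p : _ →ₐ[k] k) _
  simp only [vanishOnCommonLine_iff_exists_alternatingMatrix, ← eval_G]
  refine isClosed_setOf_exists_common_zero G (fun j => d j.1) fun j F => ?_
  exact one_mul (d j.1) ▸ IsHomogeneous.aeval (F j.1).2 (f j.2) (f_isHomogeneous j.2)

end Closed

section LinearSubstitution

variable {σ R : Type*} [Fintype σ] [CommSemiring R]

/-- Substitution of the linear forms given by the rows of `A` for the variables, that is the
pullback of polynomial functions along the linear map `A`. -/
def linearSubst (A : Matrix σ σ R) : MvPolynomial σ R →ₐ[R] MvPolynomial σ R :=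
  bind₁ A.toMvPolynomial

theorem linearSubst_X (A : Matrix σ σ R) (s : σ) : linearSubst A (X s) = ∑ t, C (A s t) * X t := by
  simp [linearSubst, Matrix.toMvPolynomial, C_mul_X_eq_monomial]

theorem eval_linearSubst (A : Matrix σ σ R) (x : σ → R) (f : MvPolynomial σ R) :
    eval x (linearSubst A f) = eval (A.mulVec x) f := by
  have eval_rows : A.mulVec x = fun s => eval x (A.toMvPolynomial s) :=
    funext fun s => (A.toMvPolynomial_eval_eq_apply s x).symm
  rw [eval_rows]
  exact comp_aeval_apply A.toMvPolynomial (aeval x : _ →ₐ[R] R) f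

theorem map_linearSubst {S : Type*} [CommSemiring S] (g : R →+* S) (A : Matrix σ σ R)
    (f : MvPolynomial σ R) :
    map g (linearSubst A f) = linearSubst (A.map g) (map g f) := by
  simp only [linearSubst, map_bind₁, ← Matrix.toMvPolynomial_map]

theorem linearSubst_one [DecidableEq σ] (f : MvPolynomial σ R) :
    linearSubst (1 : Matrix σ σ R) f = f := by
  rw [linearSubst, Matrix.toMvPolynomial_one, bind₁_X_left, AlgHom.id_apply]

theorem linearSubst_mul (A B : Matrix σ σ R) (f : MvPolynomial σ R) :
    linearSubst (A * B) f = linearSubst B (linearSubst A f) := by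
  simp only [linearSubst, bind₁_bind₁, ← Matrix.toMvPolynomial_mul]

theorem isHomogeneous_linearSubst (A : Matrix σ σ R) {f : MvPolynomial σ R} {N : ℕ}
    (hf : f.IsHomogeneous N) : (linearSubst A f).IsHomogeneous N :=
  one_mul N ▸ hf.aeval A.toMvPolynomial A.toMvPolynomial_isHomogeneous

end LinearSubstitution

section CoordinateSubspace

/-- The ideal of the coordinate subspace on which all the variables of `β` vanish. -/
def coordinateSubspaceIdeal (α β R : Type*) [CommSemiring R] : Ideal (MvPolynomial (α ⊕ β) R) :=
  Ideal.span (X '' Set.range Sum.inr)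

variable {α β R : Type*}

theorem eval_eq_zero_of_mem_coordinateSubspaceIdeal [CommSemiring R] {f : MvPolynomial (α ⊕ β) R}
    (hf : f ∈ coordinateSubspaceIdeal α β R) {x : α ⊕ β → R} (hx : ∀ j, x (Sum.inr j) = 0) :
    eval x f = 0 := by
  suffices coordinateSubspaceIdeal α β R ≤ RingHom.ker (eval x) from this hf
  rw [coordinateSubspaceIdeal, Ideal.span_le]
  rintro _ ⟨_, ⟨j, rfl⟩, rfl⟩
  simpa using hx j

theorem mem_coordinateSubspaceIdeal_of_forall_eval_eq_zero {k : Type*} [Field k] [Infinite k]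
    {f : MvPolynomial (α ⊕ β) k}
    (hf : ∀ x : α ⊕ β → k, (∀ j, x (Sum.inr j) = 0) → eval x f = 0) :
    f ∈ coordinateSubspaceIdeal α β k := by
  have restriction_eq_zero : aeval (Sum.elim X 0 : α ⊕ β → MvPolynomial α k) f = 0 :=
    MvPolynomial.funext fun y => by
      rw [map_zero, ← hf (fun s => eval y (Sum.elim X 0 s)) fun _ => map_zero _]
      exact comp_aeval_apply (Sum.elim X 0) (aeval y : _ →ₐ[k] k) f
  have congr_restriction : (Ideal.Quotient.mkₐ k (coordinateSubspaceIdeal α β k)).comp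
      ((rename Sum.inl).comp (aeval (Sum.elim X 0))) = Ideal.Quotient.mkₐ k _ := by
    refine algHom_ext fun s => ?_
    rcases s with i | j
    · simp
    · have X_mem : (X (Sum.inr j) : MvPolynomial (α ⊕ β) k) ∈ coordinateSubspaceIdeal α β k :=
        Ideal.subset_span ⟨_, ⟨j, rfl⟩, rfl⟩
      simpa using (Ideal.Quotient.eq_zero_iff_mem.2 X_mem).symm
  rw [← Ideal.Quotient.eq_zero_iff_mem, ← Ideal.Quotient.mkₐ_eq_mk k, ← congr_restriction]
  rw [AlgHom.comp_apply, AlgHom.comp_apply, restriction_eq_zero, map_zero, map_zero]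

variable [Fintype α] [Fintype β]

theorem linearSubst_mem_coordinateSubspaceIdeal [CommSemiring R] {A : Matrix (α ⊕ β) (α ⊕ β) R}
    (hA : A.toBlocks₂₁ = 0) {f : MvPolynomial (α ⊕ β) R}
    (hf : f ∈ coordinateSubspaceIdeal α β R) :
    linearSubst A f ∈ coordinateSubspaceIdeal α β R := by
  suffices coordinateSubspaceIdeal α β R ≤
    (coordinateSubspaceIdeal α β R).comap (linearSubst A) from this hf
  rw [coordinateSubspaceIdeal, Ideal.span_le]
  rintro _ ⟨_, ⟨j, rfl⟩, rfl⟩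
  simp only [SetLike.mem_coe, Ideal.mem_comap, linearSubst_X, Fintype.sum_sum_type]
  have lower_left (i : α) : A (Sum.inr j) (Sum.inl i) = 0 := congrFun (congrFun hA j) i
  simp only [lower_left, C_0, zero_mul, Finset.sum_const_zero, zero_add]
  exact sum_mem fun j' _ => Ideal.mul_mem_left _ _ (Ideal.subset_span ⟨_, ⟨j', rfl⟩, rfl⟩)

variable [DecidableEq α] [DecidableEq β]

/-- The unipotent matrix of the substitution fixing the variables of `α` and adding to those of `β`
linear forms in the variables of `α`. -/
def shear [Zero R] [One R] (B : Matrix β α R) : Matrix (α ⊕ β) (α ⊕ β) R :=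
  Matrix.fromBlocks 1 0 B 1

theorem shear_mul_shear_neg [CommRing R] (B : Matrix β α R) : shear (-B) * shear B = 1 := by
  simp [shear, Matrix.fromBlocks_multiply]

theorem exists_linearSubst_mul_shear_mem [CommRing R] {A : Matrix (α ⊕ β) (α ⊕ β) R}
    (hA : IsUnit A.toBlocks₂₂.det) :
    ∃ B : Matrix β α R, ∀ f ∈ coordinateSubspaceIdeal α β R,
      linearSubst (A * shear (-B)) f ∈ coordinateSubspaceIdeal α β R := by
  refine ⟨A.toBlocks₂₂⁻¹ * A.toBlocks₂₁, fun f => linearSubst_mem_coordinateSubspaceIdeal ?_⟩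
  rw [← Matrix.fromBlocks_toBlocks A, shear, Matrix.fromBlocks_multiply]
  simp [Matrix.mul_nonsing_inv_cancel_left _ _ hA]

end CoordinateSubspace

section FormsContainingALine

variable {k : Type*} [Field k] {q : ℕ}

theorem exists_basis_sum_extending {V ι : Type*} [AddCommGroup V] [Module k V] [Module.Finite k V]
    [Finite ι] {v : ι → V} (hv : LinearIndependent k v) (hq : Module.finrank k V = Nat.card ι + q) :
    ∃ b : Module.Basis (ι ⊕ Fin q) k V, ∀ i, b (Sum.inl i) = v i := by
  let extended := Module.Basis.sumExtend hv
  have extended_inl (i : ι) : extended (Sum.inl i) = v i := by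
    simp only [extended, Module.Basis.sumExtend, Module.Basis.reindex_apply,
      Module.Basis.extend_apply_self]
    rfl
  have : Finite (ι ⊕ Module.Basis.sumExtendIndex hv) := Module.Finite.finite_basis extended
  have : Finite (Module.Basis.sumExtendIndex hv) := Finite.sum_right ι
  have card_index : Nat.card (Module.Basis.sumExtendIndex hv) = q := by
    rw [Module.finrank_eq_nat_card_basis extended, Nat.card_sum] at hq
    omega
  refine ⟨extended.reindex ((Equiv.refl ι).sumCongr (Finite.equivFinOfCardEq card_index)),
    fun i => ?_⟩
  simpa using extended_inl i

theorem exists_linearIndependent_pair_mulVec_inr_eq_zero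
    (A : Matrix (Fin 2 ⊕ Fin q) (Fin 2 ⊕ Fin q) k) :
    ∃ v w : Fin 2 ⊕ Fin q → k, LinearIndependent k ![v, w] ∧
      ∀ s t : k, ∀ j, A.mulVec (s • v + t • w) (Sum.inr j) = 0 := by
  let lowerRows := A.toRows₂.mulVecLin
  have two_le : 2 ≤ Module.finrank k (LinearMap.ker lowerRows) := by
    have rank_nullity := lowerRows.finrank_range_add_finrank_ker
    have rank_le := Submodule.finrank_le (LinearMap.range lowerRows)
    simp only [Module.finrank_fintype_fun_eq_card, Fintype.card_sum, Fintype.card_fin]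
      at rank_nullity rank_le
    omega
  obtain ⟨f, hf⟩ := exists_linearIndependent_of_le_finrank two_le
  refine ⟨f 0, f 1, ?_, fun s t => congrFun (s • f 0 + t • f 1).2⟩
  have pair_eq : ![(f 0 : Fin 2 ⊕ Fin q → k), f 1] = Submodule.subtype _ ∘ f := by
    ext i : 1
    fin_cases i <;> rfl
  rw [pair_eq]
  exact hf.map' _ (Submodule.ker_subtype _)

theorem exists_line_iff_exists_linearSubst [Infinite k] {n : ℕ} {d : Fin n → ℕ}
    {F : Fin n → MvPolynomial (Fin 2 ⊕ Fin q) k} (hF : ∀ i, (F i).IsHomogeneous (d i)) :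
    (∃ v w, LinearIndependent k ![v, w] ∧ ∀ i, ∀ s t : k, eval (s • v + t • w) (F i) = 0) ↔
      ∃ (A : Matrix (Fin 2 ⊕ Fin q) (Fin 2 ⊕ Fin q) k) (G : Fin n → MvPolynomial _ k),
        (∀ i, (G i).IsHomogeneous (d i) ∧ G i ∈ coordinateSubspaceIdeal (Fin 2) (Fin q) k) ∧
          F = fun i => linearSubst A (G i) := by
  constructor
  · rintro ⟨v, w, hvw, hF_line⟩
    obtain ⟨b, hb⟩ := exists_basis_sum_extending (q := q) hvw (by simp)
    let P := (Pi.basisFun k _).toMatrix b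
    have hP : P * b.toMatrix (Pi.basisFun k _) = 1 := Module.Basis.toMatrix_mul_toMatrix_flip _ _
    refine ⟨b.toMatrix (Pi.basisFun k _), fun i => linearSubst P (F i), fun i =>
      ⟨isHomogeneous_linearSubst P (hF i),
        mem_coordinateSubspaceIdeal_of_forall_eval_eq_zero fun x hx => ?_⟩, funext fun i => ?_⟩
    · have mulVec_eq : P.mulVec x = x (Sum.inl 0) • v + x (Sum.inl 1) • w := by
        have hv : b (Sum.inl 0) = v := hb 0
        have hw : b (Sum.inl 1) = w := hb 1
        ext s
        simp [P, Matrix.mulVec, dotProduct, hx, hv, hw, Module.Basis.toMatrix_apply, mul_comm]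
      rw [eval_linearSubst, mulVec_eq, hF_line]
    · rw [← linearSubst_mul, hP, linearSubst_one]
  · rintro ⟨A, G, hG, rfl⟩
    obtain ⟨v, w, hvw, hA⟩ := exists_linearIndependent_pair_mulVec_inr_eq_zero A
    refine ⟨v, w, hvw, fun i s t => ?_⟩
    rw [eval_linearSubst]
    exact eval_eq_zero_of_mem_coordinateSubspaceIdeal (hG i).2 (hA s t)

theorem vanishOnCommonLine_iff_exists_line_rename {r n : ℕ} {d : Fin n → ℕ} {τ : Type*}
    (e : Fin (r + 1) ≃ τ) {F : tupleSpace k r n d} :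
    vanishOnCommonLine k F ↔ ∃ v w : τ → k, LinearIndependent k ![v, w] ∧
      ∀ i, ∀ s t : k, eval (s • v + t • w) (rename e (F i : MvPolynomial (Fin (r + 1)) k)) = 0 := by
  have linearIndependent_comp_iff (v w : τ → k) :
      LinearIndependent k ![v ∘ e, w ∘ e] ↔ LinearIndependent k ![v, w] := by
    rw [← LinearMap.linearIndependent_iff_of_injOn (LinearMap.funLeft k k e)
      (LinearMap.funLeft_injective_of_surjective k k e e.surjective).injOn]
    congr! 1
    ext i : 1
    fin_cases i <;> rfl
  simp only [← linearIndependent_comp_iff, eval_rename]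
  have exists_comp_iff {P : (Fin (r + 1) → k) → Prop} : (∃ v, P v) ↔ ∃ v : τ → k, P (v ∘ e) :=
    (e.arrowCongr (.refl k)).exists_congr_left
  rw [vanishOnCommonLine, exists_comp_iff]
  simp only [exists_comp_iff (P := fun w => LinearIndependent k ![_, w] ∧ _)]
  rfl

end FormsContainingALine

section Coordinates

variable {k : Type*} [Field k] {τ : Type*} {n : ℕ}

/-- The family of all coefficients of a tuple of forms of degrees `d 0, …, d (n - 1)`. -/
def tupleCoeffs {R : Type*} [CommSemiring R] (d : Fin n → ℕ) (F : Fin n → MvPolynomial τ R)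
    (x : Σ i, DegreeMonomials τ (d i)) : R :=
  coeff x.2.1 (F x.1)

variable [Fintype τ] [DecidableEq τ]

/-- The coefficients as linear coordinates on the affine space of tuples of forms, after renaming
the variables along `e`. -/
def tupleCoordinates {r : ℕ} (d : Fin n → ℕ) (e : Fin (r + 1) ≃ τ) :
    tupleSpace k r n d ≃ₗ[k] ((Σ i, DegreeMonomials τ (d i)) → k) where
  toFun F := tupleCoeffs d fun i => rename e (F i : MvPolynomial (Fin (r + 1)) k)
  map_add' F G := by ext; simp [tupleCoeffs]
  map_smul' a F := by ext; simp [tupleCoeffs]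
  invFun c i := ⟨rename e.symm (∑ m, monomial m.1 (c ⟨i, m⟩)),
    (IsHomogeneous.sum _ _ _ fun m _ => isHomogeneous_monomial _ m.2).rename_isHomogeneous⟩
  left_inv F := by
    ext1 i
    have isHomogeneous_rename : (rename e (F i).1).IsHomogeneous (d i) :=
      (F i).2.rename_isHomogeneous
    ext1
    simp only [tupleCoeffs]
    rw [← homogeneousComponent_eq_sum_degreeMonomials,
      homogeneousComponent_of_mem isHomogeneous_rename, if_pos rfl, rename_rename, e.symm_comp_self,
      rename_id_apply]
  right_inv c := by
    ext x
    simp only [tupleCoeffs, rename_rename, e.self_comp_symm, rename_id_apply, coeff_sum,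
      coeff_monomial, ← Subtype.ext_iff]
    simp

theorem tupleCoordinates_image_eq [Infinite k] {q : ℕ} {r : ℕ} {d : Fin n → ℕ}
    (e : Fin (r + 1) ≃ Fin 2 ⊕ Fin q) :
    tupleCoordinates d e '' {F | vanishOnCommonLine k F} =
      {c | ∃ (A : Matrix (Fin 2 ⊕ Fin q) (Fin 2 ⊕ Fin q) k) (G : Fin n → MvPolynomial _ k),
        (∀ i, (G i).IsHomogeneous (d i) ∧ G i ∈ coordinateSubspaceIdeal (Fin 2) (Fin q) k) ∧
          c = tupleCoeffs d fun i => linearSubst A (G i)} := by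
  ext c
  constructor
  · rintro ⟨F, hF, rfl⟩
    obtain ⟨A, G, hG, hF_eq⟩ := (exists_line_iff_exists_linearSubst fun i =>
      (F i).2.rename_isHomogeneous (f := e)).1 ((vanishOnCommonLine_iff_exists_line_rename e).1 hF)
    exact ⟨A, G, hG, congrArg (tupleCoeffs d) hF_eq⟩
  · rintro ⟨A, G, hG, rfl⟩
    have isHomogeneous (i : Fin n) := isHomogeneous_linearSubst A (hG i).1
    have rename_eq (i : Fin n) : rename e (rename e.symm (linearSubst A (G i))) =
        linearSubst A (G i) := by
      rw [rename_rename, e.self_comp_symm, rename_id_apply]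
    refine ⟨fun i => ⟨rename e.symm (linearSubst A (G i)), (isHomogeneous i).rename_isHomogeneous⟩,
      (vanishOnCommonLine_iff_exists_line_rename e).2 ?_,
      congrArg (tupleCoeffs d) (funext rename_eq)⟩
    simp only [rename_eq]
    exact (exists_line_iff_exists_linearSubst isHomogeneous).2 ⟨A, G, hG, rfl⟩

end Coordinates

section Chart

theorem eval_mvPolynomialX_det_toBlocks₂₂ {α β R : Type*} [CommRing R] [Fintype β]
    [DecidableEq β] (A : Matrix (α ⊕ β) (α ⊕ β) R) :
    eval (fun x => A x.1 x.2) (Matrix.mvPolynomialX (α ⊕ β) (α ⊕ β) R).toBlocks₂₂.det =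
      A.toBlocks₂₂.det := by
  rw [RingHom.map_det]
  congr 1
  ext j j'
  simp [Matrix.toBlocks₂₂]

theorem eq_zero_of_forall_eval_eq_zero_of_eval_ne_zero {σ R : Type*} [CommRing R]
    [IsDomain R] [Infinite R] {p δ : MvPolynomial σ R} (hδ : δ ≠ 0)
    (hp : ∀ x, eval x δ ≠ 0 → eval x p = 0) : p = 0 := by
  refine (mul_eq_zero.1 (MvPolynomial.funext fun x => ?_ : δ * p = 0)).resolve_left hδ
  rw [map_mul, map_zero, mul_eq_zero, or_iff_not_imp_left]
  exact hp x

variable {n : ℕ} {d : Fin n → ℕ}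

theorem aeval_aeval_tupleCoeffs_mvPolynomialX {σ R : Type*} [Fintype σ] [CommSemiring R]
    (G : Fin n → MvPolynomial σ R) (p : MvPolynomial (Σ i, DegreeMonomials σ (d i)) R)
    (A : Matrix σ σ R) :
    aeval (fun x => A x.1 x.2) (aeval (tupleCoeffs d fun i =>
        linearSubst (Matrix.mvPolynomialX σ σ R) (map C (G i))) p) =
      aeval (tupleCoeffs d fun i => linearSubst A (G i)) p := by
  rw [comp_aeval_apply]
  refine congrArg (aeval · p) (funext fun x => ?_)
  let evalAt : MvPolynomial (σ × σ) R →+* R := eval fun x => A x.1 x.2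
  have map_eq := map_linearSubst evalAt (Matrix.mvPolynomialX _ _ R) (map C (G x.1))
  have map_generic : (Matrix.mvPolynomialX _ _ R).map evalAt = A :=
    Matrix.mvPolynomialX_map_eval₂ _ A
  have evalAt_comp_C : evalAt.comp C = RingHom.id R := RingHom.ext fun a => eval_C a
  rw [map_generic, map_map, evalAt_comp_C, map_id] at map_eq
  rw [tupleCoeffs, tupleCoeffs, ← map_eq, coeff_map]
  rfl

variable {α β k : Type*} [Fintype α] [Fintype β] [Field k]

theorem aeval_tupleCoeffs_linearSubst_eq_zero [Infinite k] [DecidableEq β]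
    {G : Fin n → MvPolynomial (α ⊕ β) k}
    {p : MvPolynomial (Σ i, DegreeMonomials (α ⊕ β) (d i)) k}
    (hp : ∀ A : Matrix (α ⊕ β) (α ⊕ β) k, IsUnit A.toBlocks₂₂.det →
      aeval (tupleCoeffs d fun i => linearSubst A (G i)) p = 0) (A : Matrix (α ⊕ β) (α ⊕ β) k) :
    aeval (tupleCoeffs d fun i => linearSubst A (G i)) p = 0 := by
  have det_ne_zero : (Matrix.mvPolynomialX (α ⊕ β) (α ⊕ β) k).toBlocks₂₂.det ≠ 0 := by
    classical
    intro det_eq_zero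
    have det_one := eval_mvPolynomialX_det_toBlocks₂₂ (1 : Matrix (α ⊕ β) (α ⊕ β) k)
    rw [det_eq_zero, map_zero, ← Matrix.fromBlocks_one, Matrix.toBlocks_fromBlocks₂₂,
      Matrix.det_one] at det_one
    exact zero_ne_one det_one
  rw [← aeval_aeval_tupleCoeffs_mvPolynomialX]
  refine (congrArg _ (eq_zero_of_forall_eval_eq_zero_of_eval_ne_zero det_ne_zero
    fun x hx => ?_)).trans (map_zero _)
  rw [eval_mvPolynomialX_det_toBlocks₂₂ (fun s t => x (s, t))] at hx
  exact (aeval_aeval_tupleCoeffs_mvPolynomialX G p fun s t => x (s, t)).trans (hp _ hx.isUnit)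

variable [DecidableEq α] [DecidableEq β]

/-- The monomials of degree `N` that involve a variable of `β`, which index the coefficients of a
form of degree `N` vanishing on the coordinate subspace of `α`. -/
abbrev ResidualMonomials (α β : Type*) (N : ℕ) : Type _ :=
  {m : DegreeMonomials (α ⊕ β) N // ∃ j, m.1 (Sum.inr j) ≠ 0}

theorem eq_sum_residualMonomials {N : ℕ} {f : MvPolynomial (α ⊕ β) k}
    (f_isHomogeneous : f.IsHomogeneous N) (hf : f ∈ coordinateSubspaceIdeal α β k) :
    f = ∑ m : ResidualMonomials α β N, monomial m.1.1 (coeff m.1.1 f) := by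
  have coeff_eq_zero (m : DegreeMonomials (α ⊕ β) N) (hm : ¬ ∃ j, m.1 (Sum.inr j) ≠ 0) :
      coeff m.1 f = 0 := by
    by_contra coeff_ne_zero
    obtain ⟨_, ⟨j, rfl⟩, hj⟩ := mem_ideal_span_X_image.1 hf m.1 (mem_support_iff.2 coeff_ne_zero)
    exact hm ⟨j, hj⟩
  calc f = homogeneousComponent N f := by
        rw [homogeneousComponent_of_mem f_isHomogeneous, if_pos rfl]
    _ = ∑ m : DegreeMonomials (α ⊕ β) N, monomial m.1 (coeff m.1 f) :=
      homogeneousComponent_eq_sum_degreeMonomials N f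
    _ = ∑ m : ResidualMonomials α β N, monomial m.1.1 (coeff m.1.1 f) := by
      refine (Fintype.sum_of_injective _ Subtype.val_injective _ _ (fun m hm => ?_)
        fun m => rfl).symm
      rw [coeff_eq_zero m fun h => hm ⟨⟨m, h⟩, rfl⟩, monomial_zero]

theorem sum_residualMonomials_mem {R : Type*} [CommSemiring R] {N : ℕ}
    (Y : ResidualMonomials α β N → R) :
    ∑ m : ResidualMonomials α β N, monomial m.1.1 (Y m) ∈ coordinateSubspaceIdeal α β R := by
  refine sum_mem fun m _ => mem_ideal_span_X_image.2 fun m' hm' => ?_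
  obtain ⟨j, hj⟩ := m.2
  rw [Finset.mem_singleton.1 (support_monomial_subset hm')]
  exact ⟨Sum.inr j, ⟨j, rfl⟩, hj⟩

theorem isHomogeneous_sum_residualMonomials {R : Type*} [CommSemiring R] {N : ℕ}
    (Y : ResidualMonomials α β N → R) :
    (∑ m : ResidualMonomials α β N, monomial m.1.1 (Y m)).IsHomogeneous N :=
  IsHomogeneous.sum _ _ _ fun m _ => isHomogeneous_monomial _ m.1.2

/-- The shear by `B` of the tuple of forms vanishing on the coordinate subspace of `α` whose
coefficients differ from those of the base tuple `E` by `Y`. For `Y` arbitrary, these are the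
tuples vanishing on the graph of `-B`. -/
def chartForms {R : Type*} [CommRing R] [Algebra k R] (E : Fin n → MvPolynomial (α ⊕ β) k)
    (B : Matrix β α R) (Y : (Σ i, ResidualMonomials α β (d i)) → R) (i : Fin n) :
    MvPolynomial (α ⊕ β) R :=
  linearSubst (shear B) (map (algebraMap k R) (E i) + ∑ m, monomial m.1.1 (Y ⟨i, m⟩))

theorem map_chartForms {R S : Type*} [CommRing R] [Algebra k R] [CommRing S] [Algebra k S]
    (g : R →ₐ[k] S) (E : Fin n → MvPolynomial (α ⊕ β) k) (B : Matrix β α R)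
    (Y : (Σ i, ResidualMonomials α β (d i)) → R) (i : Fin n) :
    map (g : R →+* S) (chartForms E B Y i) = chartForms E (B.map g) (g ∘ Y) i := by
  simp [chartForms, map_linearSubst, shear, Matrix.fromBlocks_map, map_map]

/-- The indices of the parameters of the chart: the entries of a shear and the coefficients of a
tuple of forms vanishing on the coordinate subspace of `α`. -/
abbrev ChartIndex (α β : Type*) {n : ℕ} (d : Fin n → ℕ) : Type _ :=
  β × α ⊕ Σ i, ResidualMonomials α β (d i)

/-- The coefficients of the tuple `chartForms E B Y` as polynomials in the parameters `B` and
`Y`. -/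
def chartPolynomials (d : Fin n → ℕ) (E : Fin n → MvPolynomial (α ⊕ β) k) :
    (Σ i, DegreeMonomials (α ⊕ β) (d i)) → MvPolynomial (ChartIndex α β d) k :=
  tupleCoeffs d (chartForms E (Matrix.of fun j a => X (Sum.inl (j, a))) fun m => X (Sum.inr m))

theorem aeval_chartPolynomials (E : Fin n → MvPolynomial (α ⊕ β) k) (B : Matrix β α k)
    (Y : (Σ i, ResidualMonomials α β (d i)) → k) (x : Σ i, DegreeMonomials (α ⊕ β) (d i)) :
    aeval (Sum.elim (fun x => B x.1 x.2) Y) (chartPolynomials d E x) =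
      tupleCoeffs d (chartForms E B Y) x := by
  let point : MvPolynomial (ChartIndex α β d) k →ₐ[k] k := aeval (Sum.elim (fun x => B x.1 x.2) Y)
  have map_parameters : (Matrix.of fun j a => X (Sum.inl (j, a))).map point = B := by
    ext j a
    simp [point]
  have map_coefficients : (point ∘ fun m => X (Sum.inr m)) = Y := by
    ext m
    simp [point]
  have map_eq := map_chartForms (d := d) point E (Matrix.of fun j a => X (Sum.inl (j, a)))
    (fun m => X (Sum.inr m)) x.1
  rw [map_parameters, map_coefficients] at map_eq
  rw [tupleCoeffs, ← map_eq, coeff_map]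
  rfl

theorem mem_ker_aeval_chartPolynomials_iff [Infinite k] {E : Fin n → MvPolynomial (α ⊕ β) k}
    {p : MvPolynomial (Σ i, DegreeMonomials (α ⊕ β) (d i)) k} :
    p ∈ RingHom.ker (aeval (R := k) (chartPolynomials d E)) ↔
      ∀ (B : Matrix β α k) (Y : (Σ i, ResidualMonomials α β (d i)) → k),
        aeval (tupleCoeffs d (chartForms E B Y)) p = 0 := by
  have eval_eq (B : Matrix β α k) (Y : (Σ i, ResidualMonomials α β (d i)) → k) :
      aeval (Sum.elim (fun x => B x.1 x.2) Y) (aeval (chartPolynomials d E) p) =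
        aeval (tupleCoeffs d (chartForms E B Y)) p := by
    simp only [comp_aeval_apply, aeval_chartPolynomials]
  rw [RingHom.mem_ker]
  constructor
  · intro hp B Y
    rw [← eval_eq, hp, map_zero]
  · refine fun hp => MvPolynomial.funext fun t => ?_
    have t_eq : t = Sum.elim (t ∘ Sum.inl) (t ∘ Sum.inr) := by
      ext x
      rcases x with x | x <;> rfl
    rw [map_zero, t_eq]
    exact (eval_eq (fun j a => t (Sum.inl (j, a))) _).trans (hp _ _)

theorem exists_linearSubst_eq_chartForms {E G : Fin n → MvPolynomial (α ⊕ β) k}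
    (hE : ∀ i, (E i).IsHomogeneous (d i) ∧ E i ∈ coordinateSubspaceIdeal α β k)
    (hG : ∀ i, (G i).IsHomogeneous (d i) ∧ G i ∈ coordinateSubspaceIdeal α β k)
    {A : Matrix (α ⊕ β) (α ⊕ β) k} (hA : IsUnit A.toBlocks₂₂.det) :
    ∃ (B : Matrix β α k) (Y : (Σ i, ResidualMonomials α β (d i)) → k),
      (fun i => linearSubst A (G i)) = chartForms E B Y := by
  obtain ⟨B, hB⟩ := exists_linearSubst_mul_shear_mem hA
  let H (i : Fin n) := linearSubst (A * shear (-B)) (G i) - E i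
  have H_eq (i : Fin n) : H i = ∑ m : ResidualMonomials α β (d i), monomial m.1.1 _ :=
    eq_sum_residualMonomials ((isHomogeneous_linearSubst _ (hG i).1).sub (hE i).1)
      (sub_mem (hB _ (hG i).2) (hE i).2)
  refine ⟨B, fun m => coeff m.2.1.1 (H m.1), funext fun i => ?_⟩
  rw [chartForms, ← H_eq, Algebra.algebraMap_self, map_id, add_sub_cancel, ← linearSubst_mul,
    Matrix.mul_assoc, shear_mul_shear_neg, Matrix.mul_one]

theorem vanishingIdeal_eq_ker_aeval_chartPolynomials [Infinite k]
    {E : Fin n → MvPolynomial (α ⊕ β) k}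
    (hE : ∀ i, (E i).IsHomogeneous (d i) ∧ E i ∈ coordinateSubspaceIdeal α β k) :
    vanishingIdeal k {c | ∃ (A : Matrix (α ⊕ β) (α ⊕ β) k) (G : Fin n → MvPolynomial _ k),
      (∀ i, (G i).IsHomogeneous (d i) ∧ G i ∈ coordinateSubspaceIdeal α β k) ∧
        c = tupleCoeffs d fun i => linearSubst A (G i)} =
      RingHom.ker (aeval (R := k) (chartPolynomials d E)) := by
  ext p
  rw [mem_ker_aeval_chartPolynomials_iff, mem_vanishingIdeal_iff]
  constructor
  · intro hp B Y
    refine hp _ ⟨shear B, _, fun i => ⟨IsHomogeneous.add ?_ (isHomogeneous_sum_residualMonomials _),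
      add_mem ?_ (sum_residualMonomials_mem _)⟩, rfl⟩
    all_goals rw [Algebra.algebraMap_self, map_id]
    exacts [(hE i).1, (hE i).2]
  · rintro hp _ ⟨A, G, hG, rfl⟩
    refine aeval_tupleCoeffs_linearSubst_eq_zero (fun A hA => ?_) A
    obtain ⟨B, Y, chart_eq⟩ := exists_linearSubst_eq_chartForms hE hG hA
    rw [chart_eq, hp]

end Chart

section BaseForms

variable {α β R : Type*} [CommRing R]

/-- The monomial `x_a ^ (N - 1) * x_s` of degree `N`, for a variable `a` of `α`. -/
def linearMonomial (a : α) (N : ℕ) (s : α ⊕ β) : α ⊕ β →₀ ℕ :=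
  Finsupp.single (Sum.inl a) (N - 1) + Finsupp.single s 1

theorem degree_linearMonomial (a : α) {N : ℕ} (hN : 1 ≤ N) (s : α ⊕ β) :
    (linearMonomial a N s).degree = N := by
  rw [linearMonomial, map_add, Finsupp.degree_single, Finsupp.degree_single,
    Nat.sub_add_cancel hN]

theorem linearMonomial_inj {a : α} {N : ℕ} {s t : α ⊕ β} :
    linearMonomial a N s = linearMonomial a N t ↔ s = t := by
  rw [linearMonomial, linearMonomial, add_right_inj, Finsupp.single_left_inj one_ne_zero]

theorem linearMonomial_inl_apply_inr (a a' : α) (N : ℕ) (j : β) :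
    linearMonomial a N (Sum.inl a') (Sum.inr j) = 0 := by
  simp [linearMonomial]

theorem monomial_linearMonomial (a : α) (N : ℕ) (s : α ⊕ β) (c : R) :
    monomial (linearMonomial a N s) c = C c * (X (Sum.inl a) ^ (N - 1) * X s) := by
  rw [X_pow_eq_monomial, X, monomial_mul, C_mul_monomial, linearMonomial, mul_one, mul_one]

/-- The tuple with `x_a ^ (d i - 1) * x_j` in position `i = ι j` and zero in the positions outside
the range of `ι`: a base tuple for which the entries of an infinitesimal shear can be read off from
the coefficients of the sheared tuple. -/
def baseForms [Fintype β] {n : ℕ} (R : Type*) [CommSemiring R] (d : Fin n → ℕ) (a : α)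
    (ι : β → Fin n) (i : Fin n) : MvPolynomial (α ⊕ β) R :=
  ∑ j, if ι j = i then monomial (linearMonomial a (d i) (Sum.inr j)) 1 else 0

variable [Fintype β] {n : ℕ} {d : Fin n → ℕ}

theorem map_baseForms {S : Type*} [CommRing S] (g : R →+* S) (a : α) (ι : β → Fin n) (i : Fin n) :
    map g (baseForms R d a ι i) = baseForms S d a ι i := by
  simp [baseForms, apply_ite]

theorem baseForms_isHomogeneous (hd : ∀ i, 1 ≤ d i) (a : α) (ι : β → Fin n) (i : Fin n) :
    (baseForms R d a ι i).IsHomogeneous (d i) := by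
  refine IsHomogeneous.sum _ _ _ fun j _ => ?_
  split_ifs
  · exact isHomogeneous_monomial _ (degree_linearMonomial a (hd i) _)
  · exact isHomogeneous_zero _ _ _

theorem baseForms_mem_coordinateSubspaceIdeal (a : α) (ι : β → Fin n) (i : Fin n) :
    baseForms R d a ι i ∈ coordinateSubspaceIdeal α β R := by
  refine sum_mem fun j _ => ?_
  split_ifs
  · rw [monomial_linearMonomial, ← mul_assoc]
    exact Ideal.mul_mem_left _ _ (Ideal.subset_span ⟨_, ⟨j, rfl⟩, rfl⟩)
  · exact zero_mem _

end BaseForms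

section FirstOrder

variable {α β R : Type*} [Fintype α] [DecidableEq α] [Fintype β] [DecidableEq β] [CommRing R]

theorem linearSubst_shear_X_inl (B : Matrix β α R) (a : α) :
    linearSubst (shear B) (X (Sum.inl a)) = X (Sum.inl a) := by
  simp [linearSubst_X, shear, Matrix.one_apply]

theorem linearSubst_shear_X_inr (B : Matrix β α R) (j : β) :
    linearSubst (shear B) (X (Sum.inr j)) = X (Sum.inr j) + ∑ a, C (B j a) * X (Sum.inl a) := by
  simp [linearSubst_X, shear, Matrix.one_apply, add_comm]

theorem linearSubst_shear_sub_self_mem_map_C {I : Ideal R} {B : Matrix β α R}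
    (hB : ∀ j a, B j a ∈ I) (f : MvPolynomial (α ⊕ β) R) :
    linearSubst (shear B) f - f ∈ I.map C := by
  have congr_id : (Ideal.Quotient.mkₐ R (I.map C)).comp (linearSubst (shear B)) =
      Ideal.Quotient.mkₐ R (I.map C) := by
    refine algHom_ext fun s => ?_
    rcases s with a | j
    · rw [AlgHom.comp_apply, linearSubst_shear_X_inl]
    · rw [AlgHom.comp_apply, linearSubst_shear_X_inr, map_add, add_eq_left]
      exact Ideal.Quotient.eq_zero_iff_mem.2
        (sum_mem fun a _ => Ideal.mul_mem_right _ _ (Ideal.mem_map_of_mem C (hB j a)))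
  exact Ideal.Quotient.eq.1 (DFunLike.congr_fun congr_id f)

theorem linearSubst_shear_sub_self_mem_map_C_sq {I : Ideal R} {B : Matrix β α R}
    (hB : ∀ j a, B j a ∈ I) {f : MvPolynomial (α ⊕ β) R} (hf : f ∈ I.map C) :
    linearSubst (shear B) f - f ∈ (I ^ 2).map C := by
  let φ : MvPolynomial (α ⊕ β) R →+* MvPolynomial (α ⊕ β) R := linearSubst (shear B)
  have φ_C (c : R) : φ (C c) = C c := (linearSubst (shear B)).commutes c
  have φ_sub_self_mem (g : MvPolynomial (α ⊕ β) R) : φ g - g ∈ Ideal.span (C '' (I : Set R)) :=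
    linearSubst_shear_sub_self_mem_map_C hB g
  rw [Ideal.map_pow]
  refine map_sub_self_mem_sq_of_mem_span φ_sub_self_mem ?_ hf
  rintro _ ⟨c, -, rfl⟩
  rw [φ_C, sub_self]
  exact zero_mem _

theorem linearSubst_shear_monomial_linearMonomial (B : Matrix β α R) (a : α) (N : ℕ) (j : β) :
    linearSubst (shear B) (monomial (linearMonomial a N (Sum.inr j)) 1) =
      monomial (linearMonomial a N (Sum.inr j)) 1 +
        ∑ a', monomial (linearMonomial a N (Sum.inl a')) (B j a') := by
  simp only [monomial_linearMonomial, map_mul, map_pow, linearSubst_shear_X_inl,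
    linearSubst_shear_X_inr, map_one, one_mul, mul_add, Finset.mul_sum, mul_left_comm]

variable {n : ℕ} {d : Fin n → ℕ}

theorem linearSubst_shear_baseForms (B : Matrix β α R) (a : α) (ι : β → Fin n) (i : Fin n) :
    linearSubst (shear B) (baseForms R d a ι i) = baseForms R d a ι i +
      ∑ j, if ι j = i then
        ∑ a', monomial (linearMonomial a (d i) (Sum.inl a')) (B j a') else 0 := by
  simp only [baseForms, map_sum, apply_ite (linearSubst (shear B)), map_zero,
    linearSubst_shear_monomial_linearMonomial, ← Finset.sum_add_distrib]
  refine Finset.sum_congr rfl fun j _ => ?_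
  split_ifs <;> simp

/-- A coefficient position at which the linear part of `chartPolynomials` is the parameter `t`
itself. -/
def parameterMonomial (hd : ∀ i, 1 ≤ d i) (a : α) (ι : β → Fin n) :
    ChartIndex α β d → Σ i, DegreeMonomials (α ⊕ β) (d i)
  | Sum.inl (j, a') =>
    ⟨ι j, linearMonomial a (d (ι j)) (Sum.inl a'), degree_linearMonomial a (hd (ι j)) _⟩
  | Sum.inr ⟨i, m⟩ => ⟨i, m.1⟩

theorem tupleCoeffs_linearPart_parameterMonomial (hd : ∀ i, 1 ≤ d i) (a : α) {ι : β → Fin n}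
    (hι : Function.Injective ι) (B : Matrix β α R)
    (Y : (Σ i, ResidualMonomials α β (d i)) → R) (t : ChartIndex α β d) :
    tupleCoeffs d (fun i => (∑ j, if ι j = i then
        ∑ a', monomial (linearMonomial a (d i) (Sum.inl a')) (B j a') else 0) +
          ∑ m, monomial m.1.1 (Y ⟨i, m⟩)) (parameterMonomial hd a ι t) =
      Sum.elim (fun x => B x.1 x.2) Y t := by
  rcases t with ⟨j, a'⟩ | ⟨i, m⟩
  · have residual_ne (m : ResidualMonomials α β (d (ι j))) :
        m.1.1 ≠ linearMonomial a (d (ι j)) (Sum.inl a') := by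
      obtain ⟨j', hj'⟩ := m.2
      exact fun h => hj' (by rw [h, linearMonomial_inl_apply_inr])
    simp [tupleCoeffs, parameterMonomial, coeff_sum, coeff_monomial, residual_ne, hι.eq_iff,
      linearMonomial_inj]
  · have linear_ne (a' : α) : linearMonomial a (d i) (Sum.inl a') ≠ m.1.1 := by
      obtain ⟨j, hj⟩ := m.2
      exact fun h => hj (by rw [← h, linearMonomial_inl_apply_inr])
    have coeff_linear : coeff m.1.1 (∑ j, if ι j = i then
        ∑ a', monomial (linearMonomial a (d i) (Sum.inl a')) (B j a') else 0) = 0 := by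
      rw [coeff_sum]
      refine Finset.sum_eq_zero fun j _ => ?_
      split_ifs
      · simp only [coeff_sum, coeff_monomial, linear_ne, if_false, Finset.sum_const_zero]
      · exact coeff_zero _
    have coeff_residual : coeff m.1.1 (∑ m', monomial m'.1.1 (Y ⟨i, m'⟩)) = Y ⟨i, m⟩ := by
      simp [coeff_sum, coeff_monomial, ← Subtype.ext_iff]
    exact (coeff_add _ _ _).trans
      ((congrArg₂ (· + ·) coeff_linear coeff_residual).trans (zero_add _))

theorem aeval_chartPolynomials_sub_X_mem {k : Type*} [Field k] (hd : ∀ i, 1 ≤ d i) (a : α)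
    {ι : β → Fin n} (hι : Function.Injective ι) (t : ChartIndex α β d) :
    aeval (chartPolynomials d (baseForms k d a ι)) (X (parameterMonomial hd a ι t) -
        C (tupleCoeffs d (baseForms k d a ι) (parameterMonomial hd a ι t))) - X t ∈
      idealOfVars (ChartIndex α β d) k ^ 2 := by
  let B : Matrix β α (MvPolynomial (ChartIndex α β d) k) := Matrix.of fun j a => X (Sum.inl (j, a))
  let Y (m : Σ i, ResidualMonomials α β (d i)) : MvPolynomial (ChartIndex α β d) k := X (Sum.inr m)
  let residual (i : Fin n) := ∑ m, monomial m.1.1 (Y ⟨i, m⟩)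
  have X_mem (t : ChartIndex α β d) : X t ∈ idealOfVars (ChartIndex α β d) k :=
    Ideal.subset_span (Set.mem_range_self t)
  have residual_mem (i : Fin n) : residual i ∈ (idealOfVars (ChartIndex α β d) k).map C :=
    sum_mem fun m _ => by
      rw [← mul_one (Y ⟨i, m⟩), ← C_mul_monomial]
      exact Ideal.mul_mem_right _ _ (Ideal.mem_map_of_mem C (X_mem _))
  have remainder_mem := mem_map_C_iff.1 (linearSubst_shear_sub_self_mem_map_C_sq (B := B)
    (fun j a => X_mem _) (residual_mem (parameterMonomial hd a ι t).1))
    (parameterMonomial hd a ι t).2.1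
  have linearPart_eq := tupleCoeffs_linearPart_parameterMonomial hd a hι B Y t
  have elim_eq : Sum.elim (fun x => B x.1 x.2) Y t = X t := by
    rcases t with t | t <;> rfl
  convert remainder_mem using 1
  rw [map_sub, aeval_X, aeval_C, algebraMap_eq, ← elim_eq, ← linearPart_eq, chartPolynomials,
    tupleCoeffs, chartForms, map_add, map_baseForms, linearSubst_shear_baseForms, tupleCoeffs,
    tupleCoeffs, ← coeff_map, map_baseForms]
  simp only [coeff_add, coeff_sub, residual]
  ring

end FirstOrder

section Cardinality

variable {α β : Type*}

theorem degree_sumElim_zero [Finite α] [Finite β] (m : α →₀ ℕ) :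
    (Finsupp.sumElim m (0 : β →₀ ℕ)).degree = m.degree := by
  have := Fintype.ofFinite α
  have := Fintype.ofFinite β
  simp [Finsupp.degree_eq_sum]

theorem exists_sumElim_zero_eq_iff {m : α ⊕ β →₀ ℕ} :
    (∃ m' : α →₀ ℕ, Finsupp.sumElim m' 0 = m) ↔ ¬ ∃ j, m (Sum.inr j) ≠ 0 := by
  push Not
  constructor
  · rintro ⟨m', rfl⟩ j
    exact Finsupp.sumElim_inr _ _ j
  · refine fun hm => ⟨m.comapDomain Sum.inl Sum.inl_injective.injOn, ?_⟩
    ext (a | j)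
    · rfl
    · exact (hm j).symm

theorem card_residualMonomials_add_card_degreeMonomials (α β : Type*) [Finite α] [Finite β]
    (N : ℕ) :
    Nat.card (ResidualMonomials α β N) + Nat.card (DegreeMonomials α N) =
      Nat.card (DegreeMonomials (α ⊕ β) N) := by
  classical
  have := Fintype.ofFinite α
  have := Fintype.ofFinite β
  let extendByZero (m : DegreeMonomials α N) :
      {m : DegreeMonomials (α ⊕ β) N // ¬ ∃ j, m.1 (Sum.inr j) ≠ 0} :=
    ⟨⟨Finsupp.sumElim m.1 0, (degree_sumElim_zero m.1).trans m.2⟩,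
      exists_sumElim_zero_eq_iff.1 ⟨m.1, rfl⟩⟩
  have extendByZero_bijective : Function.Bijective extendByZero := by
    constructor
    · intro m m' h
      ext a
      exact DFunLike.congr_fun (congrArg (fun m => m.1.1) h) (Sum.inl a)
    · rintro ⟨⟨m, m_degree⟩, hm⟩
      obtain ⟨m, rfl⟩ := exists_sumElim_zero_eq_iff.2 hm
      exact ⟨⟨m, (degree_sumElim_zero m).symm.trans m_degree⟩, rfl⟩
  rw [Nat.card_congr (Equiv.ofBijective _ extendByZero_bijective),
    ← Nat.card_sum,
    Nat.card_congr (Equiv.sumCompl fun m : DegreeMonomials (α ⊕ β) N =>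
      ∃ j, m.1 (Sum.inr j) ≠ 0)]

theorem card_chartIndex {q n : ℕ} (d : Fin n → ℕ) :
    Nat.card (ChartIndex (Fin 2) (Fin q) d) =
      (∑ i, (q + 1 + d i).choose (d i)) - (∑ i, (d i + 1)) + 2 * q := by
  have card_eq (i : Fin n) : Nat.card (ResidualMonomials (Fin 2) (Fin q) (d i)) + (d i + 1) =
      (q + 1 + d i).choose (d i) := by
    have card_add := card_residualMonomials_add_card_degreeMonomials (Fin 2) (Fin q) (d i)
    rwa [card_degreeMonomials, card_degreeMonomials, Nat.card_sum, Nat.card_fin, Nat.card_fin,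
      show 2 + d i - 1 = d i + 1 by omega, Nat.choose_succ_self_right,
      show 2 + q + d i - 1 = q + 1 + d i by omega] at card_add
  rw [← Finset.sum_congr rfl fun i _ => card_eq i, Finset.sum_add_distrib, Nat.add_sub_cancel,
    Nat.card_sum, Nat.card_prod, Nat.card_sigma, Nat.card_fin, Nat.card_fin, add_comm, mul_comm]

end Cardinality

theorem statement5_general [IsAlgClosed K] {r n : ℕ} (hr : 1 ≤ r) (hn : r ≤ n + 1)
    (d : Fin n → ℕ) (hd : ∀ i, 1 ≤ d i) :
    IsClosed {F : tupleSpace K r n d | vanishOnCommonLine K F} ∧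
      IsIrreducible {F : tupleSpace K r n d | vanishOnCommonLine K F} ∧
      dimSet {F : tupleSpace K r n d | vanishOnCommonLine K F} =
        (((∑ i, (r + d i).choose (d i)) - (∑ i, (d i + 1)) + 2 * (r - 1) : ℕ) : WithBot ℕ∞) := by
  obtain ⟨q, rfl⟩ : ∃ q, r = q + 1 := ⟨r - 1, by omega⟩
  let e : Fin (q + 1 + 1) ≃ Fin 2 ⊕ Fin q := (finCongr (by omega)).trans finSumFinEquiv.symm
  let ι : Fin q → Fin n := Fin.castLE (by omega)
  have ι_injective : Function.Injective ι := Fin.castLE_injective _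
  have isClosed := isClosed_setOf_vanishOnCommonLine (k := K) (r := q + 1) (d := d)
  have coordinates_inducing := isZariskiInducing_linearEquiv (tupleCoordinates (k := K) d e)
  have vanishingIdeal_eq := vanishingIdeal_eq_ker_aeval_chartPolynomials
    (E := baseForms K d (0 : Fin 2) ι) fun i =>
      ⟨baseForms_isHomogeneous hd 0 ι i, baseForms_mem_coordinateSubspaceIdeal 0 ι i⟩
  rw [← tupleCoordinates_image_eq e] at vanishingIdeal_eq
  refine ⟨isClosed, ?_, ?_⟩
  · rw [coordinates_inducing.isIrreducible_iff, vanishingIdeal_eq]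
    exact RingHom.ker_isPrime _
  · rw [dimSet, isClosed.closure_eq, coordinates_inducing.topologicalKrullDim_coe_eq
      (tupleCoordinates d e).surjective isClosed, vanishingIdeal_eq,
      ringKrullDim_quotient_ker_aeval_eq_card (aeval_chartPolynomials_sub_X_mem hd 0 ι_injective),
      card_chartIndex, Nat.add_sub_cancel]

/-- For `r ≥ 2`, `a ≥ 1` and positive degrees `d_1, …, d_{r+a-1}`, the locus
`L` of `(r+a-1)`-tuples of forms whose common vanishing locus contains a line of `ℙ^r` is a
Zariski closed irreducible subset of `W_{r,d_1} × ⋯ × W_{r,d_{r+a-1}}` of codimension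
`Σ (d_i + 1) - 2(r-1)`, i.e. of dimension `Σ C(r + d_i, d_i) - Σ (d_i + 1) + 2(r-1)`. -/
theorem statement5 [IsAlgClosed K] (r a : ℕ) (hr : 2 ≤ r) (ha : 1 ≤ a)
    (d : Fin (r + a - 1) → ℕ) (hd1 : ∀ i, 1 ≤ d i)
    (L : Set (tupleSpace K r (r + a - 1) d))
    (hL : L = {F | vanishOnCommonLine K F}) :
    IsClosed L ∧ IsIrreducible L ∧
      dimSet L =
        (((∑ i : Fin (r + a - 1), (r + d i).choose (d i)) -
          (∑ i : Fin (r + a - 1), (d i + 1)) + 2 * (r - 1) : ℕ) : WithBot ℕ∞) := by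
  subst hL
  exact statement5_general K (by omega) (by omega) d hd1

end Statement5
end

section
/- Let r ≥ 2, a ≥ 1, and b be integers with 2 ≤ b ≤ r, let 1 ≤ d_1 ≤ ⋯ ≤ d_{r+a−1} be integers, and let 1 ≤ i_1 < ⋯ < i_{r−b+a} = r+a−1 be integers (note that then 1 ≤ b−i_j+j ≤ b for every j). Then Σ_{j=1}^{r−b+a} h_{b, b−i_j+j}(d_{i_j}) − (b+1)(r−b) > Σ_{i=1}^{r+a−1}(d_i+1) − 2(r−1). -/
/-- The function `h_{r,a}(d) = (r-a) * C(d+a-1, d-1) + C(d+a, d)`. -/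
def hpoly (r a d : ℤ) : ℤ :=
  (r - a) * ((d + a - 1).toNat.choose (d - 1).toNat : ℤ) + ((d + a).toNat.choose d.toNat : ℤ)

/-!
Each term satisfies `h_{b,e}(d) ≥ b d + 1` when `1 ≤ e ≤ b`, by the linear lower bound
`C(k + e, k) ≥ k e + 1`. On the other side, exactly `b - 1` of the indices `1, …, r + a - 1` are not
of the form `i_j`, and at each of them `d_i - 1` is at most the value at the maximal index
`r + a - 1`, which is selected; hence `∑ (d_i - 1) ≤ b ∑ (d_{i_j} - 1)`.
Comparing the two leaves a margin of `(b - 1) a`.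
-/

lemma mul_add_one_le_choose_add (k e : ℕ) : k * e + 1 ≤ (k + e).choose k := by
  cases k with
  | zero => simp
  | succ k =>
    induction e with
    | zero => simp
    | succ e ih =>
      have diagonal : k + 1 ≤ (k + 1 + e).choose k := by
        simpa using Nat.choose_le_choose k (Nat.le_add_right (k + 1) e)
      calc (k + 1) * (e + 1) + 1 = (k + 1) + ((k + 1) * e + 1) := by ring
        _ ≤ (k + 1 + e).choose k + (k + 1 + e).choose (k + 1) := add_le_add diagonal ih
        _ = (k + 1 + (e + 1)).choose (k + 1) := (Nat.choose_succ_succ _ _).symm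

lemma mul_add_one_le_hpoly {b e d : ℤ} (he : 1 ≤ e) (heb : e ≤ b) (hd : 1 ≤ d) :
    b * d + 1 ≤ hpoly b e d := by
  obtain ⟨k, rfl⟩ : ∃ k : ℕ, d = k + 1 := ⟨(d - 1).toNat, by omega⟩
  lift e to ℕ using by omega
  have choose_pred : (k : ℤ) + 1 ≤ (k + e).choose k := by
    have hke : k ≤ k * e := Nat.le_mul_of_pos_right k (by omega)
    have := mul_add_one_le_choose_add k e
    omega
  have choose_self : ((k : ℤ) + 1) * e + 1 ≤ (k + 1 + e).choose (k + 1) := by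
    exact_mod_cast mul_add_one_le_choose_add (k + 1) e
  have hpoly_eq : hpoly b e (k + 1) =
      (b - e) * (k + e).choose k + (k + 1 + e).choose (k + 1) := by
    unfold hpoly
    congr <;> omega
  calc b * (k + 1) + 1 = (b - e) * (k + 1) + ((k + 1) * e + 1) := by ring
    _ ≤ (b - e) * (k + e).choose k + (k + 1 + e).choose (k + 1) :=
      add_le_add (mul_le_mul_of_nonneg_left choose_pred (sub_nonneg.2 heb)) choose_self
    _ = hpoly b e (k + 1) := hpoly_eq.symm

section StrictMonoFin

variable {m n : ℕ} {f : Fin m → Fin n}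

lemma val_le_val_apply_of_strictMono (hf : StrictMono f) (j : Fin m) : (j : ℕ) ≤ f j := by
  have maps : Set.MapsTo f (Finset.Iio j) (Finset.Iio (f j)) := fun i hi ↦ by
    simpa using hf (by simpa using hi)
  simpa using Finset.card_le_card_of_injOn f maps hf.injective.injOn

lemma val_apply_add_le_of_strictMono (hf : StrictMono f) (j : Fin m) :
    (f j : ℕ) + m ≤ n + j := by
  have hrev := val_le_val_apply_of_strictMono
    (Fin.rev_strictAnti.comp (hf.comp_strictAnti Fin.rev_strictAnti)) j.rev
  simp only [Function.comp_apply, Fin.rev_rev, Fin.val_rev] at hrev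
  omega

end StrictMonoFin

lemma sum_le_nsmul_sum_comp {α β M : Type*} [Fintype α] [Fintype β]
    [AddCommMonoid M] [PartialOrder M] [IsOrderedAddMonoid M]
    {f : β → α} (hf : Function.Injective f) {x : α → M} (hx : ∀ j, 0 ≤ x (f j))
    (l : β) (hl : ∀ i, x i ≤ x (f l)) :
    ∑ i, x i ≤ (Fintype.card α - Fintype.card β + 1) • ∑ j, x (f j) := by
  classical
  have card_compl : (Finset.univ.image f)ᶜ.card = Fintype.card α - Fintype.card β := by
    rw [Finset.card_compl, Finset.card_image_of_injective _ hf, Finset.card_univ]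
  calc ∑ i, x i = ∑ i ∈ (Finset.univ.image f)ᶜ, x i + ∑ j, x (f j) := by
        rw [← Finset.sum_compl_add_sum (Finset.univ.image f), Finset.sum_image hf.injOn]
    _ ≤ (Fintype.card α - Fintype.card β) • x (f l) + ∑ j, x (f j) := by
        rw [← card_compl]
        gcongr
        exact Finset.sum_le_card_nsmul _ _ _ fun i _ ↦ hl i
    _ ≤ (Fintype.card α - Fintype.card β) • ∑ j, x (f j) + ∑ j, x (f j) := by
        gcongr
        exact Finset.single_le_sum (f := fun j ↦ x (f j)) (fun j _ ↦ hx j) (Finset.mem_univ l)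
    _ = (Fintype.card α - Fintype.card β + 1) • ∑ j, x (f j) := (succ_nsmul _ _).symm

theorem statement8_general {r a b : ℕ} (hb : 1 ≤ b) (hbr : b ≤ r)
    (d : Fin (r + a - 1) → ℕ) (hd : ∀ i, 1 ≤ d i)
    (ι : Fin (r - b + a) → Fin (r + a - 1)) (hι : StrictMono ι)
    (l : Fin (r - b + a)) (hl : ∀ i, d i ≤ d (ι l)) :
    (∑ i, ((d i : ℤ) + 1)) - 2 * ((r : ℤ) - 1) + ((b : ℤ) - 1) * a ≤
      (∑ j, hpoly b ((b : ℤ) - ((ι j : ℕ) : ℤ) + ((j : ℕ) : ℤ)) (d (ι j))) -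
        ((b : ℤ) + 1) * ((r : ℤ) - b) := by
  have term_bound (j) :
      (b : ℤ) * d (ι j) + 1 ≤ hpoly b ((b : ℤ) - ((ι j : ℕ) : ℤ) + ((j : ℕ) : ℤ)) (d (ι j)) := by
    have lower := val_le_val_apply_of_strictMono hι j
    have upper := val_apply_add_le_of_strictMono hι j
    exact mul_add_one_le_hpoly (by omega) (by omega) (by exact_mod_cast hd (ι j))
  have hpoly_sum_bound := Finset.sum_le_sum fun j (_ : j ∈ Finset.univ) ↦ term_bound j
  have degree_sum_bound : ∑ i, ((d i : ℤ) - 1) ≤ b * ∑ j, ((d (ι j) : ℤ) - 1) := by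
    have card_eq : r + a - 1 - (r - b + a) + 1 = b := by omega
    simpa only [Fintype.card_fin, card_eq, nsmul_eq_mul] using
      sum_le_nsmul_sum_comp hι.injective (x := fun i ↦ (d i : ℤ) - 1)
        (fun j ↦ sub_nonneg.2 (by exact_mod_cast hd (ι j))) l
        fun i ↦ sub_le_sub_right (by exact_mod_cast hl i) 1
  have card_all : ((r + a - 1 : ℕ) : ℤ) = r + a - 1 := by omega
  have card_selected : ((r - b + a : ℕ) : ℤ) = r - b + a := by omega
  simp only [Finset.sum_sub_distrib, Finset.sum_add_distrib, Finset.sum_const, Finset.card_univ,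
    Fintype.card_fin, nsmul_eq_mul, mul_one, ← Finset.mul_sum, card_all, card_selected]
    at hpoly_sum_bound degree_sum_bound ⊢
  linarith

/-- Let `r ≥ 2`, `a ≥ 1`, `2 ≤ b ≤ r`, let `1 ≤ d_1 ≤ ⋯ ≤ d_{r+a-1}` and
let `1 ≤ i_1 < ⋯ < i_{r-b+a} = r+a-1` be indices (encoded 0-indexed by a strictly monotone
`ι : Fin (r-b+a) → Fin (r+a-1)` with last value the last index; note that
`b - i_j + j` is invariant under this shift of indexing). Then
`Σ_j h_{b, b-i_j+j}(d_{i_j}) - (b+1)(r-b) > Σ_i (d_i + 1) - 2(r-1)`. -/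
theorem statement8 (r a b : ℕ) (hr : 2 ≤ r) (ha : 1 ≤ a) (hb : 2 ≤ b) (hbr : b ≤ r)
    (d : Fin (r + a - 1) → ℕ) (hd1 : ∀ i, 1 ≤ d i) (hmono : Monotone d)
    (ι : Fin (r - b + a) → Fin (r + a - 1)) (hι : StrictMono ι)
    (hlast : ι ⟨r - b + a - 1, by omega⟩ = ⟨r + a - 2, by omega⟩) :
    (∑ i : Fin (r + a - 1), ((d i : ℤ) + 1)) - 2 * ((r : ℤ) - 1) <
      (∑ j : Fin (r - b + a),
        hpoly (b : ℤ) ((b : ℤ) - ((ι j : ℕ) : ℤ) + ((j : ℕ) : ℤ)) (d (ι j))) -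
        ((b : ℤ) + 1) * ((r : ℤ) - (b : ℤ)) := by
  have last_max (i) : d i ≤ d (ι ⟨r - b + a - 1, by omega⟩) :=
    hmono (by rw [hlast, Fin.le_def]; exact Nat.le_pred_of_lt i.isLt)
  have margin_pos : (0 : ℤ) < (b - 1) * a := mul_pos (by omega) (by omega)
  linarith [statement8_general (by omega) hbr d hd1 ι hι _ last_max]
end

section
/- Let r, a, b be integers with a ≥ 1 and 1 ≤ b ≤ r, and let 1 ≤ d_1 ≤ ⋯ ≤ d_{r+a−1} be integers. Then Σ_{j=1}^{r−b+a−1}(b·d_j + 1) + (b·d_{r+a−1} + 1) − (b+1)(r−b) ≥ Σ_{j=1}^{r+a−1}(d_j + 1) − 2(r−1) + a(b−1). -/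
/-!
Split the `d_j` into the first `m = r - b + a - 1` entries and the last `b`. Writing `D` for the
largest entry, the two sides of the inequality differ by exactly
`(b - 1) * ∑_{j ≤ m} (d_j - 1) + ∑_{j > m} (D - d_j)`.
-/

theorem sum_univ_eq_sum_castLE_add_sum_natAdd {M : Type*} [AddCommMonoid M] {m k n : ℕ}
    (h : m + k = n) (f : Fin n → M) :
    ∑ i, f i = ∑ j : Fin m, f (Fin.castLE (by omega) j) +
      ∑ j : Fin k, f (Fin.cast h (Fin.natAdd m j)) := by
  subst h
  exact Fin.sum_univ_add f

section OrderedRing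

variable {R : Type*} [CommRing R] [PartialOrder R] [IsOrderedRing R]

theorem sum_add_one_add_sub_one_mul_card_le {ι : Type*} (s : Finset ι) (x : ι → R) {c : R}
    (hc : 1 ≤ c) (hx : ∀ i ∈ s, 1 ≤ x i) :
    ∑ i ∈ s, (x i + 1) + (c - 1) * s.card ≤ ∑ i ∈ s, (c * x i + 1) :=
  calc
    ∑ i ∈ s, (x i + 1) + (c - 1) * s.card = ∑ i ∈ s, (x i + c) := by
      simp only [Finset.sum_add_distrib, Finset.sum_const, nsmul_eq_mul]
      ring
    _ ≤ ∑ i ∈ s, (c * x i + 1) := Finset.sum_le_sum fun i hi ↦ by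
      linear_combination mul_add_mul_le_mul_add_mul hc (hx i hi)

theorem statement9_general (a b r : ℕ) (ha : 1 ≤ a) (hb : 1 ≤ b) (hbr : b ≤ r)
    (d : Fin (r + a - 1) → R) (hhead : ∀ i, i.val < r - b + a - 1 → 1 ≤ d i)
    (htail : ∀ i, r - b + a - 1 ≤ i.val → d i ≤ d ⟨r + a - 2, by omega⟩) :
    (∑ j : Fin (r + a - 1), (d j + 1)) - 2 * ((r : R) - 1) + (a : R) * ((b : R) - 1) ≤
      (∑ j : Fin (r - b + a - 1), ((b : R) * d (Fin.castLE (by omega) j) + 1)) +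
        ((b : R) * d ⟨r + a - 2, by omega⟩ + 1) - ((b : R) + 1) * ((r : R) - (b : R)) := by
  have head_add_tail : r - b + a - 1 + b = r + a - 1 := by omega
  have one_le_b : (1 : R) ≤ b := by simpa only [Nat.cast_one] using Nat.mono_cast (α := R) hb
  have head_le := sum_add_one_add_sub_one_mul_card_le Finset.univ
    (fun j : Fin (r - b + a - 1) ↦ d (Fin.castLE (by omega) j)) one_le_b
    fun j _ ↦ hhead _ j.isLt
  have tail_le : ∑ j : Fin b, (d (Fin.cast head_add_tail (Fin.natAdd _ j)) + 1) ≤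
      b * (d ⟨r + a - 2, by omega⟩ + 1) := by
    simpa only [Finset.card_univ, Fintype.card_fin, nsmul_eq_mul] using
      Finset.sum_le_card_nsmul Finset.univ _ _ fun j _ ↦
        add_le_add_left (htail (Fin.cast head_add_tail (Fin.natAdd _ j)) (Nat.le_add_right _ _)) 1
  have card_head : ((r - b + a - 1 : ℕ) : R) = r - b + a - 1 := by
    rw [Nat.cast_sub (by omega), Nat.cast_add, Nat.cast_sub hbr, Nat.cast_one]
  rw [Finset.card_univ, Fintype.card_fin, card_head] at head_le
  rw [sum_univ_eq_sum_castLE_add_sum_natAdd head_add_tail]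
  linear_combination head_le + tail_le

end OrderedRing

/-- Let `a ≥ 1`, `1 ≤ b ≤ r`, and `1 ≤ d_1 ≤ ⋯ ≤ d_{r+a-1}`. Then
`Σ_{j=1}^{r-b+a-1} (b·d_j + 1) + (b·d_{r+a-1} + 1) - (b+1)(r-b)
  ≥ Σ_{j=1}^{r+a-1} (d_j + 1) - 2(r-1) + a(b-1)`. -/
theorem statement9 (r a b : ℕ) (ha : 1 ≤ a) (hb : 1 ≤ b) (hbr : b ≤ r)
    (d : Fin (r + a - 1) → ℕ) (hd1 : ∀ i, 1 ≤ d i) (hmono : Monotone d) :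
    (∑ j : Fin (r + a - 1), ((d j : ℤ) + 1)) - 2 * ((r : ℤ) - 1) + (a : ℤ) * ((b : ℤ) - 1) ≤
      (∑ j : Fin (r - b + a - 1), ((b : ℤ) * (d (Fin.castLE (by omega) j) : ℤ) + 1)) +
        ((b : ℤ) * (d ⟨r + a - 2, by omega⟩ : ℤ) + 1) - ((b : ℤ) + 1) * ((r : ℤ) - (b : ℤ)) :=
  statement9_general a b r ha hb hbr (fun i ↦ (d i : ℤ)) (fun i _ ↦ mod_cast hd1 i)
    fun i _ ↦ mod_cast hmono (Fin.le_def.2 (Nat.le_sub_one_of_lt i.isLt))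
end

section
/- Let k be an algebraically closed field and r ≥ 2 an integer. For homogeneous quadratic forms F_1, F_2 in k[x_0,…,x_r], one has dim V(F_1,F_2) ≥ r−1 if and only if either there exists a nonzero linear form L with L dividing both F_1 and F_2, or F_1 and F_2 are linearly dependent over k. -/
open MvPolynomial

/-! A nonzero polynomial dividing a nonzero form is itself a form, so two linearly independent
quadratic forms without a common linear factor are relatively prime, and the converse is clear.
Relatively prime elements of a UFD form a regular sequence, hence cut the Krull dimension down by
two, whereas a common nonunit factor `p` gives `V(p) ⊆ V(F₁, F₂)`, which has codimension at most
one because all maximal ideals of a polynomial ring over a field have the same height. -/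

section Dimension

theorem ringKrullDim_quotient_span_pair_add_two_le {R : Type*} [CommRing R] [IsDomain R]
    [DecompositionMonoid R] {x y : R} (hxy : IsRelPrime x y) :
    ringKrullDim (R ⧸ Ideal.span {x, y}) + 2 ≤ ringKrullDim R := by
  rcases eq_or_ne x 0 with rfl | hx
  · have hspan : Ideal.span {0, y} = ⊤ :=
      Ideal.eq_top_of_isUnit_mem _ (Ideal.subset_span (by simp)) (isRelPrime_zero_left.mp hxy)
    simp [hspan, ringKrullDim_eq_bot_of_subsingleton]
  have hle : Ideal.span {x} ≤ Ideal.span {x, y} := Ideal.span_mono (by simp)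
  have hy : Ideal.Quotient.mk (Ideal.span {x}) y ∈ nonZeroDivisors _ := by
    rw [mem_nonZeroDivisors_iff_right]
    intro z hz
    obtain ⟨z, rfl⟩ := Ideal.Quotient.mk_surjective z
    rw [← map_mul, Ideal.Quotient.eq_zero_iff_dvd] at hz
    exact (Ideal.Quotient.eq_zero_iff_dvd x z).mpr (hxy.dvd_of_dvd_mul_right hz)
  calc ringKrullDim (R ⧸ Ideal.span {x, y}) + 2
      = ringKrullDim (R ⧸ Ideal.span {x, y}) + 1 + 1 := by rw [add_assoc, one_add_one_eq_two]
    _ ≤ ringKrullDim (R ⧸ Ideal.span {x}) + 1 := by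
        gcongr
        refine ringKrullDim_succ_le_of_surjective (Ideal.Quotient.factor hle)
          (Ideal.Quotient.factor_surjective hle) hy ?_
        rw [Ideal.Quotient.factor_mk, Ideal.Quotient.eq_zero_iff_mem]
        exact Ideal.subset_span (by simp)
    _ ≤ ringKrullDim R :=
        ringKrullDim_quotient_succ_le_of_nonZeroDivisor (mem_nonZeroDivisors_of_ne_zero hx)

theorem under_comap_algEquiv {R A B : Type*} [CommRing R] [CommRing A] [CommRing B] [Algebra R A]
    [Algebra R B] (e : A ≃ₐ[R] B) (I : Ideal B) : (I.comap e).under R = I.under R := by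
  ext a
  simp only [Ideal.under, Ideal.mem_comap, e.commutes]

theorem height_eq_height_under_add_natCard {R σ : Type*} [CommRing R] [IsNoetherianRing R]
    [IsJacobsonRing R] [Finite σ] (M : Ideal (MvPolynomial σ R)) [M.IsMaximal] :
    M.height = (M.under R).height + Nat.card σ := by
  induction σ using Finite.induction_empty_option with
  | of_equiv e ih =>
    let φ := renameEquiv R e
    have hM : (M.comap φ).IsMaximal := Ideal.comap_isMaximal_of_equiv φ
    calc M.height = (M.comap φ).height := (RingEquiv.height_comap φ.toRingEquiv M).symm
      _ = (M.under R).height + Nat.card _ := by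
        rw [ih, under_comap_algEquiv, Nat.card_congr e]
  | h_empty =>
    let φ := (isEmptyAlgEquiv R PEmpty).symm
    calc M.height = (M.comap φ).height := (RingEquiv.height_comap φ.toRingEquiv M).symm
      _ = ((M.comap φ).under R).height := by
        rw [Ideal.under, Algebra.algebraMap_self, Ideal.comap_id]
      _ = (M.under R).height + Nat.card PEmpty := by
        rw [under_comap_algEquiv, Nat.card_of_isEmpty, Nat.cast_zero, add_zero]
  | @h_option α _ ih =>
    let φ := (optionEquivLeft R α).symm
    let Q := M.comap φ
    have hQ : Q.IsMaximal := Ideal.comap_isMaximal_of_equiv φ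
    have hunder : (Q.under (MvPolynomial α R)).IsMaximal :=
      Polynomial.isMaximal_comap_C_of_isJacobsonRing Q
    have hlies : Q.LiesOver (Q.under (MvPolynomial α R)) := ⟨rfl⟩
    calc M.height = Q.height := (RingEquiv.height_comap φ.toRingEquiv M).symm
      _ = (Q.under (MvPolynomial α R)).height + 1 := Polynomial.height_eq_height_add_one _ Q
      _ = (Q.under R).height + Nat.card α + 1 := by rw [ih, Ideal.under_under]
      _ = (M.under R).height + Nat.card (Option α) := by
        rw [under_comap_algEquiv, Finite.card_option, Nat.cast_succ, add_assoc]

variable {K σ : Type*} [Field K]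

theorem natCard_le_ringKrullDim_quotient_span_singleton_add_one [Finite σ]
    {p : MvPolynomial σ K} (hp : ¬IsUnit p) :
    (Nat.card σ : WithBot ℕ∞) ≤ ringKrullDim (MvPolynomial σ K ⧸ Ideal.span {p}) + 1 := by
  obtain ⟨M, hM, hpM⟩ := exists_max_ideal_of_mem_nonunits hp
  have hheight : M.height = Nat.card σ := by
    rw [height_eq_height_under_add_natCard, Ideal.eq_bot_of_prime (M.under K), Ideal.height_bot,
      zero_add]
  calc (Nat.card σ : WithBot ℕ∞) = M.height := by rw [hheight]; rfl
    _ ≤ _ := Ideal.height_le_ringKrullDim_quotient_add_one hpM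

theorem le_ringKrullDim_quotient_span_pair_iff_not_isRelPrime {r : ℕ} (hσ : Nat.card σ = r + 1)
    (F G : MvPolynomial σ K) :
    (r : WithBot ℕ∞) ≤ ringKrullDim (MvPolynomial σ K ⧸ Ideal.span {F, G}) ↔
      ¬IsRelPrime F G := by
  have hfinite : Finite σ := Nat.finite_of_card_ne_zero (hσ ▸ r.succ_ne_zero)
  constructor
  · intro hr hFG
    have hdim : (r : WithBot ℕ∞) + 1 + 1 ≤ r + 1 := by
      calc (r : WithBot ℕ∞) + 1 + 1
          = r + 2 := by rw [add_assoc, one_add_one_eq_two]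
        _ ≤ ringKrullDim (MvPolynomial σ K ⧸ Ideal.span {F, G}) + 2 := by gcongr
        _ ≤ ringKrullDim (MvPolynomial σ K) := ringKrullDim_quotient_span_pair_add_two_le hFG
        _ = r + 1 := by
          rw [MvPolynomial.ringKrullDim_of_isNoetherianRing, ringKrullDim_eq_zero_of_field, hσ,
            zero_add, Nat.cast_succ]
    norm_cast at hdim
    omega
  · intro hFG
    simp only [IsRelPrime, not_forall] at hFG
    obtain ⟨p, hpF, hpG, hp⟩ := hFG
    have hle : Ideal.span {F, G} ≤ Ideal.span {p} := by
      simp [Ideal.span_le, Set.pair_subset_iff, Ideal.mem_span_singleton, hpF, hpG]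
    calc (r : WithBot ℕ∞) ≤ ringKrullDim (MvPolynomial σ K ⧸ Ideal.span {p}) := by
          have h := natCard_le_ringKrullDim_quotient_span_singleton_add_one hp
          rwa [hσ, Nat.cast_succ, ENat.WithBot.add_le_add_one_right_iff] at h
      _ ≤ ringKrullDim (MvPolynomial σ K ⧸ Ideal.span {F, G}) :=
          ringKrullDim_le_of_surjective _ (Ideal.Quotient.factor_surjective hle)

end Dimension

section Homogeneous

variable {R σ : Type*}

/-- The ring homomorphism `x_i ↦ x_i T`, which records the homogeneous components of a polynomial
as the coefficients of a polynomial in `T`. It turns homogeneity into being a monomial in `T`. -/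
noncomputable def gradingHom [CommSemiring R] :
    MvPolynomial σ R →ₐ[R] Polynomial (MvPolynomial σ R) :=
  aeval fun i ↦ Polynomial.C (X i) * Polynomial.X

theorem gradingHom_monomial [CommSemiring R] (u : σ →₀ ℕ) (a : R) :
    gradingHom (monomial u a) = Polynomial.monomial u.degree (monomial u a) := by
  have hX : (u.prod fun i k ↦ (Polynomial.C (X i : MvPolynomial σ R) * Polynomial.X) ^ k) =
      Polynomial.C (u.prod fun i k ↦ X i ^ k) * Polynomial.X ^ u.degree := by
    simp only [mul_pow, Finsupp.prod, Finset.prod_mul_distrib, Finset.prod_pow_eq_pow_sum,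
      Finsupp.degree_apply, map_prod, map_pow]
  rw [gradingHom, aeval_monomial, hX, Polynomial.algebraMap_apply, algebraMap_eq, ← mul_assoc,
    ← map_mul, ← monomial_eq, Polynomial.C_mul_X_pow_eq_monomial]

theorem coeff_gradingHom [CommSemiring R] (p : MvPolynomial σ R) (d : ℕ) :
    (gradingHom p).coeff d = homogeneousComponent d p := by
  induction p using MvPolynomial.induction_on' with
  | monomial u a =>
    rw [gradingHom_monomial, Polynomial.coeff_monomial,
      homogeneousComponent_of_mem (isHomogeneous_monomial a rfl)]
    simp only [eq_comm]
  | add p q hp hq => rw [map_add, Polynomial.coeff_add, hp, hq, map_add]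

theorem gradingHom_eq_monomial [CommSemiring R] {p : MvPolynomial σ R} {n : ℕ}
    (hp : p.IsHomogeneous n) : gradingHom p = Polynomial.monomial n p := by
  ext1 d
  rw [coeff_gradingHom, Polynomial.coeff_monomial, homogeneousComponent_of_mem hp]
  simp only [eq_comm]

theorem isHomogeneous_totalDegree_of_dvd [CommSemiring R] [NoZeroDivisors R]
    {p f : MvPolynomial σ R} {n : ℕ} (hf : f.IsHomogeneous n) (hf0 : f ≠ 0) (hpf : p ∣ f) :
    p.IsHomogeneous p.totalDegree := by
  obtain ⟨q, rfl⟩ := hpf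
  have hmul : gradingHom p * gradingHom q = Polynomial.monomial n (p * q) := by
    rw [← map_mul, gradingHom_eq_monomial hf]
  have hmul0 : gradingHom p * gradingHom q ≠ 0 := by
    rwa [hmul, Ne, Polynomial.monomial_eq_zero_iff]
  have hp0 := left_ne_zero_of_mul hmul0
  have hq0 := right_ne_zero_of_mul hmul0
  have hdeg : (gradingHom p).natDegree + (gradingHom q).natDegree = n := by
    rw [← Polynomial.natDegree_mul hp0 hq0, hmul, Polynomial.natDegree_monomial_eq n hf0]
  have htrail : (gradingHom p).natTrailingDegree + (gradingHom q).natTrailingDegree = n := by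
    rw [← Polynomial.natTrailingDegree_mul hp0 hq0, hmul,
      Polynomial.natTrailingDegree_monomial hf0]
  have hp_eq : (gradingHom p).natDegree = (gradingHom p).natTrailingDegree := by
    have hp_le := (gradingHom p).natTrailingDegree_le_natDegree
    have hq_le := (gradingHom q).natTrailingDegree_le_natDegree
    omega
  have hhom : p.IsHomogeneous (gradingHom p).natDegree := by
    intro u hu
    have hcoeff : (gradingHom p).coeff u.degree ≠ 0 := fun h0 ↦ hu <| by
      rw [coeff_gradingHom] at h0
      simpa only [coeff_homogeneousComponent, if_true, coeff_zero] using congrArg (coeff u) h0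
    have hweight : Finsupp.weight 1 u = u.degree :=
      (DFunLike.congr_fun Finsupp.degree_eq_weight_one u).symm
    rw [hweight]
    exact le_antisymm (Polynomial.le_natDegree_of_ne_zero hcoeff)
      (hp_eq ▸ Polynomial.natTrailingDegree_le_of_ne_zero hcoeff)
  rwa [hhom.totalDegree (left_ne_zero_of_mul hf0)]

theorem not_isUnit_of_isHomogeneous [CommSemiring R] [Nontrivial R] {p : MvPolynomial σ R} {n : ℕ}
    (hp : p.IsHomogeneous n) (hn : n ≠ 0) : ¬IsUnit p := by
  intro hunit
  have hcoeff : IsUnit (coeff 0 p) := hunit.map constantCoeff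
  rw [hp.coeff_eq_zero (by simpa using hn.symm)] at hcoeff
  exact not_isUnit_zero hcoeff

theorem exists_smul_eq_of_isHomogeneous_of_dvd [CommRing R] [IsDomain R] {p F : MvPolynomial σ R}
    {n : ℕ} (hp : p.IsHomogeneous n) (hF : F.IsHomogeneous n) (hpF : p ∣ F) :
    ∃ c : R, c • p = F := by
  rcases eq_or_ne F 0 with rfl | hF0
  · exact ⟨0, zero_smul R p⟩
  obtain ⟨q, rfl⟩ := hpF
  have hp0 := left_ne_zero_of_mul hF0
  have hdeg := totalDegree_mul_of_isDomain hp0 (right_ne_zero_of_mul hF0)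
  rw [hF.totalDegree hF0, hp.totalDegree hp0, left_eq_add, totalDegree_eq_zero_iff_eq_C] at hdeg
  exact ⟨coeff 0 q, by rw [smul_eq_C_mul, ← hdeg, mul_comm]⟩

theorem not_linearIndependent_pair_of_dvd [CommRing R] [IsDomain R] {p F G : MvPolynomial σ R}
    {n : ℕ} (hp : p.IsHomogeneous n) (hF : F.IsHomogeneous n) (hG : G.IsHomogeneous n)
    (hpF : p ∣ F) (hpG : p ∣ G) : ¬LinearIndependent R ![F, G] := by
  obtain ⟨a, rfl⟩ := exists_smul_eq_of_isHomogeneous_of_dvd hp hF hpF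
  obtain ⟨b, rfl⟩ := exists_smul_eq_of_isHomogeneous_of_dvd hp hG hpG
  intro hind
  have hb : b = 0 := (LinearIndependent.pair_iff.mp hind b (-a) (by module)).1
  exact hind.ne_zero 1 (by simp [hb])

end Homogeneous

section QuadraticForms

variable {K σ : Type*} [Field K]

theorem isUnit_of_totalDegree_eq_zero {p : MvPolynomial σ K} (hp : p ≠ 0)
    (hdeg : p.totalDegree = 0) : IsUnit p := by
  rw [totalDegree_eq_zero_iff_eq_C] at hdeg
  rw [hdeg] at hp ⊢
  exact (isUnit_iff_ne_zero.mpr fun hcoeff ↦ hp (by rw [hcoeff, C_0])).map C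

theorem dvd_or_dvd_of_not_linearIndependent {A : Type*} [Ring A] [Algebra K A] {x y : A}
    (h : ¬LinearIndependent K ![x, y]) : x ∣ y ∨ y ∣ x := by
  by_cases hx : x = 0
  · exact .inr (hx ▸ dvd_zero y)
  · rw [LinearIndependent.pair_iff' hx] at h
    push Not at h
    obtain ⟨a, rfl⟩ := h
    exact .inl (dvd_smul_of_dvd a dvd_rfl)

theorem not_isRelPrime_iff_of_isHomogeneous_two {F G : MvPolynomial σ K}
    (hF : F.IsHomogeneous 2) (hG : G.IsHomogeneous 2) :
    ¬IsRelPrime F G ↔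
      (∃ L : MvPolynomial σ K, L.IsHomogeneous 1 ∧ L ≠ 0 ∧ L ∣ F ∧ L ∣ G) ∨
        ¬LinearIndependent K ![F, G] := by
  constructor
  · intro hFG
    rw [or_iff_not_imp_right, not_not]
    intro hind
    simp only [IsRelPrime, not_forall] at hFG
    obtain ⟨p, hpF, hpG, hp⟩ := hFG
    have hF0 : F ≠ 0 := hind.ne_zero 0
    have hp0 : p ≠ 0 := ne_zero_of_dvd_ne_zero hF0 hpF
    have hphom := isHomogeneous_totalDegree_of_dvd hF hF0 hpF
    have hle : p.totalDegree ≤ 2 := hF.totalDegree hF0 ▸ totalDegree_le_of_dvd_of_isDomain hpF hF0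
    interval_cases hdeg : p.totalDegree
    · exact absurd (isUnit_of_totalDegree_eq_zero hp0 hdeg) hp
    · exact ⟨p, hphom, hp0, hpF, hpG⟩
    · exact absurd hind (not_linearIndependent_pair_of_dvd hphom hF hG hpF hpG)
  · rintro (⟨L, hL, -, hLF, hLG⟩ | hdep) hFG
    · exact not_isUnit_of_isHomogeneous hL one_ne_zero (hFG hLF hLG)
    · rcases dvd_or_dvd_of_not_linearIndependent hdep with hdvd | hdvd
      · exact not_isUnit_of_isHomogeneous hF two_ne_zero (hFG.isUnit_of_dvd hdvd)
      · exact not_isUnit_of_isHomogeneous hG two_ne_zero (hFG.symm.isUnit_of_dvd hdvd)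

end QuadraticForms

theorem statement11_general {K σ : Type*} [Field K] {r : ℕ} (hσ : Nat.card σ = r + 1)
    {F₁ F₂ : MvPolynomial σ K} (h₁ : F₁.IsHomogeneous 2) (h₂ : F₂.IsHomogeneous 2) :
    (r : WithBot ℕ∞) ≤ ringKrullDim (MvPolynomial σ K ⧸ Ideal.span {F₁, F₂}) ↔
      (∃ L : MvPolynomial σ K, L.IsHomogeneous 1 ∧ L ≠ 0 ∧ L ∣ F₁ ∧ L ∣ F₂) ∨
        ¬LinearIndependent K ![F₁, F₂] := by
  rw [le_ringKrullDim_quotient_span_pair_iff_not_isRelPrime hσ,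
    not_isRelPrime_iff_of_isHomogeneous_two h₁ h₂]

/-- Over an algebraically closed field `K` and for `r ≥ 2`, two quadratic
forms `F₁, F₂` in `K[x_0, …, x_r]` satisfy `dim V(F₁, F₂) ≥ r - 1` (encoded: the affine cone
`K[x_0,…,x_r] ⧸ (F₁, F₂)` has Krull dimension at least `r`) if and only if either some
nonzero linear form divides both `F₁` and `F₂`, or `F₁` and `F₂` are linearly dependent
over `K`. -/
theorem statement11 (K : Type*) [Field K] [IsAlgClosed K] (r : ℕ) (hr : 2 ≤ r)
    (F₁ F₂ : MvPolynomial (Fin (r + 1)) K)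
    (h₁ : F₁.IsHomogeneous 2) (h₂ : F₂.IsHomogeneous 2) :
    ((r : ℕ∞) : WithBot ℕ∞) ≤
        ringKrullDim (MvPolynomial (Fin (r + 1)) K ⧸
          (Ideal.span {F₁, F₂} : Ideal (MvPolynomial (Fin (r + 1)) K))) ↔
      (∃ L : MvPolynomial (Fin (r + 1)) K,
          L.IsHomogeneous 1 ∧ L ≠ 0 ∧ L ∣ F₁ ∧ L ∣ F₂) ∨
        ¬ LinearIndependent K ![F₁, F₂] :=
  statement11_general (Nat.card_fin _) h₁ h₂
end
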